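/- arXiv:0801.4194 — 2 statements merged into one kernel-verified Lean document; each statement's English description precedes it below -/
import Mathlib

section
/- Let T be a computable real number with 0 < T < 1. Then the series Z(T) = ∑_{p ∈ dom U} 2^{−|p|/T} and W(1,T) = ∑_{p ∈ dom U} |p|·2^{−|p|/T} both converge, Z(T) > 0, and the energy E(T) = W(1,T)/Z(T) is a left-computable real number which is Chaitin T-random and T-compressible. -/
open Filter

/-- A set of finite binary strings is prefix-free if no element of it is a
prefix of another (distinct) element of it. -/
def PrefixFree (S : Set (List Bool)) : Prop :=
  ∀ p ∈ S, ∀ q ∈ S, p <+: q → p = q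

/-- A computer: a partial recursive function from finite binary strings to
finite binary strings whose domain is a prefix-free set. -/
structure Computer where
  f : List Bool →. List Bool
  partrec : Partrec f
  prefixFree : PrefixFree {p | (f p).Dom}

/-- The domain of a computer. -/
def Computer.domain (C : Computer) : Set (List Bool) := {p | (C.f p).Dom}

/-- A computer `U` is optimal if every computer can be simulated on `U` with
only a constant increase in program length. -/
def IsOptimal (U : Computer) : Prop :=
  ∀ C : Computer, ∃ d : ℕ, ∀ p : List Bool, (C.f p).Dom →
    ∃ p' : List Bool, p'.length ≤ p.length + d ∧ ∀ s, s ∈ C.f p → s ∈ U.f p'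

/-- Program-size complexity `H(s)`: the minimal length of a program `p`
with `U(p) = s`. -/
noncomputable def H (U : Computer) (s : List Bool) : ℕ :=
  sInf {n | ∃ p : List Bool, p.length = n ∧ s ∈ U.f p}

/-- The `n`-th bit (`n ≥ 1`) of the base-two expansion of `x mod 1`
(the expansion chosen with infinitely many zeros). -/
noncomputable def binDigit (x : ℝ) (n : ℕ) : Bool :=
  decide (⌊Int.fract x * 2 ^ n⌋ % 2 = 1)

/-- The first `n` bits of the base-two expansion of `x mod 1` (with
infinitely many zeros). -/
noncomputable def bits (x : ℝ) (n : ℕ) : List Bool :=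
  (List.range n).map fun i => binDigit x (i + 1)

/-- A real `x` is weakly Chaitin `D`-random (w.r.t. the computer `U`). -/
def WeaklyChaitinRandom (U : Computer) (D x : ℝ) : Prop :=
  ∃ c : ℝ, ∀ n : ℕ, 1 ≤ n → D * n - c ≤ (H U (bits x n) : ℝ)

/-- A real `x` is Chaitin `D`-random (w.r.t. the computer `U`). -/
def ChaitinRandom (U : Computer) (D x : ℝ) : Prop :=
  Tendsto (fun n : ℕ => (H U (bits x n) : ℝ) - D * n) atTop atTop

/-- A real `x` is `D`-compressible (w.r.t. the computer `U`). -/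
def DCompressible (U : Computer) (D x : ℝ) : Prop :=
  Filter.limsup (fun n : ℕ => (H U (bits x n) : ℝ) / n) atTop ≤ D

/-- A computable real number. -/
def ComputableReal (T : ℝ) : Prop :=
  ∃ f : ℕ → ℚ, Computable f ∧ ∀ n : ℕ, 1 ≤ n → |T - (f n : ℝ)| < 1 / n

/-- A right-computable real number. -/
def RightComputable (T : ℝ) : Prop :=
  ∃ g : ℕ → ℚ, Computable g ∧ (∀ n, T ≤ (g n : ℝ)) ∧
    Tendsto (fun n => ((g n : ℚ) : ℝ)) atTop (nhds T)

/-- A left-computable real number. -/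
def LeftComputable (T : ℝ) : Prop := RightComputable (-T)

/-- The term `2 ^ (-|p| / T)` of the partition function `Z(T)`. -/
noncomputable def zterm (U : Computer) (T : ℝ) (p : U.domain) : ℝ :=
  (2 : ℝ) ^ (-((p : List Bool).length : ℝ) / T)

/-- The term `|p| ^ Q * 2 ^ (-|p| / T)` of `W(Q,T)`. -/
noncomputable def wterm (U : Computer) (Q T : ℝ) (p : U.domain) : ℝ :=
  ((p : List Bool).length : ℝ) ^ Q * (2 : ℝ) ^ (-((p : List Bool).length : ℝ) / T)

/-- The term `|p| * 2 ^ (-|p| / T)` of `W(1,T)`. -/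
noncomputable def wlterm (U : Computer) (T : ℝ) (p : U.domain) : ℝ :=
  ((p : List Bool).length : ℝ) * (2 : ℝ) ^ (-((p : List Bool).length : ℝ) / T)

/-- The term `|p| ^ 2 * 2 ^ (-|p| / T)` of `W(2,T)`. -/
noncomputable def wsqterm (U : Computer) (T : ℝ) (p : U.domain) : ℝ :=
  ((p : List Bool).length : ℝ) ^ 2 * (2 : ℝ) ^ (-((p : List Bool).length : ℝ) / T)

/-- A lower-computable function `f : ℕ⁺ → [0,∞)` (represented on `ℕ`,
with all conditions imposed on positive arguments). -/
def LowerComputableFun (f : ℕ → ℝ) : Prop :=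
  ∃ a : ℕ → ℕ → ℚ, Computable₂ a ∧
    (∀ k n : ℕ, 1 ≤ k → 1 ≤ n → (a k n : ℝ) ≤ f n) ∧
    (∀ n : ℕ, 1 ≤ n → Tendsto (fun k => ((a k n : ℚ) : ℝ)) atTop (nhds (f n)))

/-- A lower-computable semi-measure on finite binary strings. -/
def LowerComputableSemiMeasure (r : List Bool → ℝ) : Prop :=
  (∀ s, 0 ≤ r s) ∧ (∀ s, r s ≤ 1) ∧ Summable r ∧ (∑' s, r s) ≤ 1 ∧
    ∃ f : ℕ → List Bool → ℚ, Computable₂ f ∧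
      (∀ n s, ((f n s : ℚ) : ℝ) ≤ r s) ∧
      (∀ s, Tendsto (fun n => ((f n s : ℚ) : ℝ)) atTop (nhds (r s)))

/-- A universal probability. -/
def UniversalProbability (m : List Bool → ℝ) : Prop :=
  LowerComputableSemiMeasure m ∧
    ∀ r : List Bool → ℝ, LowerComputableSemiMeasure r →
      ∃ c : ℝ, 0 < c ∧ ∀ s, c * r s ≤ m s

namespace EnergyAux

/-- The raw code of a rational. -/
def rawRat (q : ℚ) : ℕ := Nat.pair (Encodable.encode q.num) q.den

/-- raw codes are those satisfying this. -/
def rawOk (m : ℕ) : Prop := 0 < m.unpair.2 ∧ ((m.unpair.1 + 1) / 2).Coprime m.unpair.2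

theorem int_enc (z : ℤ) : (Encodable.encode z + 1) / 2 = z.natAbs := by
  cases z with
  | ofNat n =>
    have : Encodable.encode (Int.ofNat n) = 2 * n := rfl
    rw [this]; simp; omega
  | negSucc n =>
    have : Encodable.encode (Int.negSucc n) = 2 * n + 1 := rfl
    rw [this]; simp; omega

theorem int_enc_odd (z : ℤ) : (Encodable.encode z) % 2 = 1 ↔ z < 0 := by
  cases z with
  | ofNat n =>
    have : Encodable.encode (Int.ofNat n) = 2 * n := rfl
    rw [this]; simp
  | negSucc n =>
    have : Encodable.encode (Int.negSucc n) = 2 * n + 1 := rfl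
    rw [this]; have := Int.negSucc_lt_zero n; constructor
    · intro _; exact this
    · intro _; omega

theorem raw_eq (q : ℚ) : @Encodable.encode ℚ Rat.instEncodable q = rawRat q := by
  rcases q with ⟨a, b, c, d⟩
  rfl

theorem rawOk_range : Set.range rawRat = {m | rawOk m} := by
  ext m
  constructor
  · rintro ⟨q, rfl⟩
    simp only [rawRat, rawOk, Set.mem_ofPred_eq, Nat.unpair_pair, int_enc]
    exact ⟨q.den_pos, q.reduced⟩
  · rintro ⟨h1, h2⟩
    obtain ⟨z, hz⟩ : ∃ z : ℤ, Encodable.encode z = m.unpair.1 :=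
      ⟨Denumerable.ofNat ℤ m.unpair.1, Denumerable.encode_ofNat _⟩
    rw [← hz, int_enc] at h2
    refine ⟨⟨z, m.unpair.2, h1.ne', h2⟩, ?_⟩
    simp only [rawRat, hz, Nat.pair_unpair]

theorem rawRat_inj : Function.Injective rawRat := by
  intro a b h
  rw [← raw_eq, ← raw_eq] at h
  exact @Encodable.encode_injective ℚ Rat.instEncodable _ _ h

/-- The code of a rational. -/
def encQ (q : ℚ) : ℕ := @Encodable.encode ℚ Rat.instDenumerable.toEncodable q

theorem encQ_primrec : Primrec encQ := Primrec.encode (α := ℚ)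

theorem enc_count (q : ℚ) [DecidablePred rawOk] :
    encQ q = Nat.count rawOk (rawRat q) := by
  have key : ∀ (s : Set ℕ) (h1 : DecidablePred (· ∈ s)) (h2 : Infinite s) (x : s),
      @Encodable.encode s (@Nat.Subtype.denumerable s h1 h2).toEncodable x
        = Nat.count (· ∈ s) x := by
    intro s h1 h2 x
    obtain ⟨n, rfl⟩ := Nat.Subtype.ofNat_surjective x
    have e1 : @Encodable.encode s (@Nat.Subtype.denumerable s h1 h2).toEncodable
        (Nat.Subtype.ofNat s n) = n := by
      have := @Denumerable.encode_ofNat s (@Nat.Subtype.denumerable s h1 h2) n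
      exact this
    rw [e1]
    have hinf : (Set.ofPred (· ∈ s)).Infinite := Set.infinite_coe_iff.1 h2
    have e2 : ((Nat.Subtype.ofNat s n : s) : ℕ) = Nat.nth (· ∈ s) n := by
      rw [Nat.nth_apply_eq_orderIsoOfNat hinf]
      have hd : h1 = fun a => Classical.propDecidable (a ∈ Set.ofPred (· ∈ s)) := by
        funext a; exact Subsingleton.elim _ _
      subst hd
      rfl
    rw [e2, Nat.count_nth_of_infinite hinf]
  let i0 : Encodable ℚ := Rat.instEncodable
  let i1 := @Encodable.decidableRangeEncode ℚ Rat.instEncodable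
  let i2 : Infinite (Set.range (@Encodable.encode ℚ Rat.instEncodable)) :=
    Infinite.of_injective _ (Equiv.ofInjective _ Encodable.encode_injective).injective
  have e1 : @Encodable.encode ℚ Rat.instDenumerable.toEncodable q = 
    @Encodable.encode _ (@Nat.Subtype.denumerable (Set.range (@Encodable.encode ℚ Rat.instEncodable)) i1 i2).toEncodable (@Encodable.equivRangeEncode ℚ Rat.instEncodable q) := rfl
  refine e1.trans ?_
  rw [key]
  have : ((@Encodable.equivRangeEncode ℚ Rat.instEncodable q : _) : ℕ) = rawRat q := by
    exact raw_eq q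
  rw [this]
  have hs : (Set.range (@Encodable.encode ℚ Rat.instEncodable)) = {m | rawOk m} := by
    rw [← rawOk_range]; congr 1
  congr 1

theorem rawOk_primrec : PrimrecPred rawOk := by
  have h : PrimrecPred fun m : ℕ => 0 < m.unpair.2 ∧
      ∀ x < m.unpair.2 + 1, (¬ (((m.unpair.1 + 1) / 2) % x = 0)) ∨ (¬ (m.unpair.2 % x = 0)) ∨ x = 1 := by
    have u1 : Primrec fun m : ℕ => m.unpair.1 := Primrec.fst.comp Primrec.unpair
    have u2 : Primrec fun m : ℕ => m.unpair.2 := Primrec.snd.comp Primrec.unpair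
    refine PrimrecPred.and (Primrec.nat_lt.comp (Primrec.const 0) u2) ?_
    have R : PrimrecRel fun (x m : ℕ) => (¬ (((m.unpair.1 + 1) / 2) % x = 0)) ∨ (¬ (m.unpair.2 % x = 0)) ∨ x = 1 := by
      refine PrimrecPred.primrecRel (p := fun a : ℕ × ℕ => (¬ (((a.2.unpair.1 + 1) / 2) % a.1 = 0)) ∨ (¬ (a.2.unpair.2 % a.1 = 0)) ∨ a.1 = 1) ?_
      refine PrimrecPred.or (PrimrecPred.not ?_) (PrimrecPred.or (PrimrecPred.not ?_) ?_)
      · exact Primrec.eq.comp (Primrec.nat_mod.comp (Primrec.nat_div.comp (Primrec.succ.comp (u1.comp Primrec.snd)) (Primrec.const 2)) Primrec.fst) (Primrec.const 0)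
      · exact Primrec.eq.comp (Primrec.nat_mod.comp (u2.comp Primrec.snd) Primrec.fst) (Primrec.const 0)
      · exact Primrec.eq.comp Primrec.fst (Primrec.const 1)
    exact (PrimrecRel.forall_lt R).comp (Primrec.succ.comp u2) Primrec.id
  refine h.of_eq fun m => ?_
  unfold rawOk
  refine and_congr_right fun hpos => ?_
  constructor
  · intro H
    have hg := H (Nat.gcd ((m.unpair.1 + 1) / 2) m.unpair.2)
      (Nat.lt_succ_of_le (Nat.gcd_le_right _ hpos))
    rcases hg with h | h | h
    · exact absurd (Nat.mod_eq_zero_of_dvd (Nat.gcd_dvd_left _ _)) h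
    · exact absurd (Nat.mod_eq_zero_of_dvd (Nat.gcd_dvd_right _ _)) h
    · exact h
  · intro H x _
    by_contra hc
    push Not at hc
    exact hc.2.2 (Nat.eq_one_of_dvd_coprimes H (Nat.dvd_of_mod_eq_zero hc.1)
      (Nat.dvd_of_mod_eq_zero hc.2.1))

/-- Search gives computable functions. -/
theorem computable_search {α : Type*} [Primcodable α] {p : α → ℕ → Bool} {f : α → ℕ}
    (hp : Computable₂ p) (h1 : ∀ a n, p a n = true ↔ n = f a) : Computable f := by
  have : Partrec fun a => Nat.rfind (fun n => (Part.some (p a n))) :=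
    Partrec.rfind hp.partrec₂
  refine this.of_eq_tot fun a => ?_
  refine Nat.mem_rfind.2 ?_
  refine ⟨?_, ?_⟩
  · simpa using ((h1 a _).2 rfl)
  · intro m hm
    have : p a m ≠ true := by rw [Ne, h1]; omega
    simpa using this

theorem count_primrec (P : ℕ → Prop) [DecidablePred P] (hP : PrimrecPred P) :
    Primrec (Nat.count P) := by
  have := Primrec.nat_rec₁ (f := fun n c => if P n then c + 1 else c) 0
    (Primrec.ite (hP.comp Primrec.fst) (Primrec.succ.comp Primrec.snd) Primrec.snd)
  refine this.of_eq fun n => ?_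
  induction n with
  | zero => simp
  | succ n ih =>
    rw [Nat.count_succ]; simp only; rw [ih]; split_ifs <;> rfl

theorem rawRat_computable : Computable rawRat := by
  classical
  refine computable_search (p := fun q m => decide (rawOk m ∧ Nat.count rawOk m = encQ q)) ?_ ?_
  · have : Primrec₂ fun (q : ℚ) m => decide (rawOk m ∧ Nat.count rawOk m = encQ q) := by
      refine PrimrecPred.decide (p := fun a : ℚ × ℕ => rawOk a.2 ∧ Nat.count rawOk a.2 = encQ a.1) ?_
      refine PrimrecPred.and (rawOk_primrec.comp Primrec.snd) ?_
      exact Primrec.eq.comp ((count_primrec _ rawOk_primrec).comp Primrec.snd)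
        (encQ_primrec.comp Primrec.fst)
    exact this.to_comp
  · intro q m
    rw [decide_eq_true_iff]
    have hq : rawOk (rawRat q) := by
      have : rawRat q ∈ {m | rawOk m} := rawOk_range ▸ ⟨q, rfl⟩
      exact this
    constructor
    · rintro ⟨h1, h2⟩
      rw [enc_count] at h2
      exact Nat.count_injective h1 hq h2
    · rintro rfl
      exact ⟨hq, (enc_count q).symm⟩

theorem den_computable : Computable (fun q : ℚ => q.den) := by
  have : Computable fun q : ℚ => (rawRat q).unpair.2 :=
    Computable.snd.comp (Computable.unpair.comp rawRat_computable)
  exact this.of_eq fun q => by simp [rawRat]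

theorem encnum_computable : Computable (fun q : ℚ => Encodable.encode q.num) := by
  have : Computable fun q : ℚ => (rawRat q).unpair.1 :=
    Computable.fst.comp (Computable.unpair.comp rawRat_computable)
  exact this.of_eq fun q => by simp [rawRat]

theorem natAbs_computable : Computable (fun q : ℚ => q.num.natAbs) := by
  have : Computable fun q : ℚ => (Encodable.encode q.num + 1) / 2 :=
    (Primrec.nat_div.comp Primrec.succ (Primrec.const 2)).to_comp.comp encnum_computable
  exact this.of_eq fun q => int_enc _

theorem toNat_computable : Computable (fun q : ℚ => q.num.toNat) := by
  have : Computable fun q : ℚ => if Encodable.encode q.num % 2 = 1 then 0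
      else (Encodable.encode q.num + 1) / 2 :=
    (Primrec.ite (c := fun n : ℕ => n % 2 = 1)
      (Primrec.eq.comp (Primrec.nat_mod.comp Primrec.id (Primrec.const 2)) (Primrec.const 1))
      (Primrec.const 0) (Primrec.nat_div.comp Primrec.succ (Primrec.const 2))).to_comp.comp
        encnum_computable
  refine this.of_eq fun q => ?_
  rw [int_enc]
  simp only [int_enc_odd]
  split_ifs <;> omega

theorem negdiv_aux (fd fn ft : ℕ → ℕ) (hd : Computable fd) (hn : Computable fn) (ht : Computable ft) :
    Computable₂ fun (a : ℕ × ℕ) n => decide (ft n = 0 ∧ fn n * (a.2 + 1) = a.1 * fd n) := by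
  have hprim : Primrec fun (x : (ℕ × ℕ) × (ℕ × ℕ × ℕ)) =>
      decide (x.2.2.2 = 0 ∧ x.2.1 * (x.1.2 + 1) = x.1.1 * x.2.2.1) := by
    refine PrimrecPred.decide (PrimrecPred.and ?_ ?_)
    · exact Primrec.eq.comp (Primrec.snd.comp (Primrec.snd.comp Primrec.snd)) (Primrec.const 0)
    · exact Primrec.eq.comp
        (Primrec.nat_mul.comp (Primrec.fst.comp Primrec.snd) (Primrec.succ.comp (Primrec.snd.comp Primrec.fst)))
        (Primrec.nat_mul.comp (Primrec.fst.comp Primrec.fst) (Primrec.fst.comp (Primrec.snd.comp Primrec.snd)))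
  exact hprim.to_comp.comp (Computable.pair Computable.fst
      (Computable.pair (hn.comp Computable.snd) (Computable.pair (hd.comp Computable.snd) (ht.comp Computable.snd))))

/-- Negated fractions form a computable function. -/
theorem negdiv_computable : Computable (fun a : ℕ × ℕ => (-((a.1 : ℚ) / ((a.2 : ℚ) + 1)) : ℚ)) := by
  suffices h : Computable (fun a : ℕ × ℕ => encQ (-((a.1 : ℚ) / ((a.2 : ℚ) + 1)))) from
    Computable.encode_iff.1 h
  have hd : Computable fun n : ℕ => (Denumerable.ofNat ℚ n).den :=
    den_computable.comp (Primrec.ofNat ℚ).to_comp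
  have hn : Computable fun n : ℕ => (Denumerable.ofNat ℚ n).num.natAbs :=
    natAbs_computable.comp (Primrec.ofNat ℚ).to_comp
  have ht : Computable fun n : ℕ => (Denumerable.ofNat ℚ n).num.toNat :=
    toNat_computable.comp (Primrec.ofNat ℚ).to_comp
  have hp := negdiv_aux _ _ _ hd hn ht
  refine computable_search hp ?_
  · rintro ⟨a, b⟩ n
    rw [decide_eq_true_iff]
    have : n = encQ (-((a : ℚ) / ((b : ℚ) + 1))) ↔
        Denumerable.ofNat ℚ n = -((a : ℚ) / ((b : ℚ) + 1)) := by
      constructor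
      · rintro rfl; exact Denumerable.ofNat_encode _
      · intro h; rw [← h]; exact (Denumerable.encode_ofNat _).symm
    rw [this]
    generalize Denumerable.ofNat ℚ n = q
    have hb : (0 : ℚ) < (b : ℚ) + 1 := by positivity
    have hqd : (0 : ℚ) < q.den := by exact_mod_cast q.den_pos
    have hq : q = q.num / q.den := (Rat.num_div_den q).symm
    constructor
    · rintro ⟨h1, h2⟩
      have h3 : q.num = -(q.num.natAbs : ℤ) := by omega
      have h4 : (q.num : ℚ) = -(q.num.natAbs : ℚ) := by exact_mod_cast h3
      have h5 : (q.num.natAbs : ℚ) * (b + 1) = a * q.den := by exact_mod_cast h2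
      rw [hq, h4, neg_div]
      congr 1
      rw [div_eq_div_iff hqd.ne' hb.ne']
      exact h5
    · intro h
      have h1 : q ≤ 0 := by rw [h]; simp only [neg_nonpos]; positivity
      have h1' : q.num ≤ 0 := Rat.num_nonpos.2 h1
      refine ⟨by omega, ?_⟩
      have h3 : q.num = -(q.num.natAbs : ℤ) := by omega
      have h4 : (q.num : ℚ) = -(q.num.natAbs : ℚ) := by exact_mod_cast h3
      rw [hq, h4, neg_div] at h
      have h := neg_injective h
      rw [div_eq_div_iff hqd.ne' hb.ne'] at h
      exact_mod_cast h

end EnergyAux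

namespace EnergyAux

theorem pow_primrec : Primrec₂ ((· ^ ·) : ℕ → ℕ → ℕ) :=
  Primrec₂.unpaired'.1 Nat.Primrec.pow

/-- Greatest numerator below the root. -/
def apx (x : ℕ × ℕ × ℕ) : ℕ :=
  Nat.findGreatest (fun u => 2 ^ x.2.2 * u ^ x.2.1 ≤ (2 ^ x.1) ^ x.2.1) (2 ^ x.1)

theorem apx_primrec : Primrec apx := by
  unfold apx
  refine Primrec.nat_findGreatest (f := fun x : ℕ × ℕ × ℕ => 2 ^ x.1)
    (p := fun (x : ℕ × ℕ × ℕ) u => 2 ^ x.2.2 * u ^ x.2.1 ≤ (2 ^ x.1) ^ x.2.1)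
    (pow_primrec.comp (Primrec.const 2) Primrec.fst) ?_
  refine PrimrecPred.primrecRel
    (p := fun y : (ℕ × ℕ × ℕ) × ℕ => 2 ^ y.1.2.2 * y.2 ^ y.1.2.1 ≤ (2 ^ y.1.1) ^ y.1.2.1) ?_
  have p1 : Primrec fun y : (ℕ × ℕ × ℕ) × ℕ => y.1.1 := Primrec.fst.comp Primrec.fst
  have p2 : Primrec fun y : (ℕ × ℕ × ℕ) × ℕ => y.1.2.1 :=
    Primrec.fst.comp (Primrec.snd.comp Primrec.fst)
  have p3 : Primrec fun y : (ℕ × ℕ × ℕ) × ℕ => y.1.2.2 :=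
    Primrec.snd.comp (Primrec.snd.comp Primrec.fst)
  exact Primrec.nat_le.comp
    (Primrec.nat_mul.comp (pow_primrec.comp (Primrec.const 2) p3) (pow_primrec.comp Primrec.snd p2))
    (pow_primrec.comp (pow_primrec.comp (Primrec.const 2) p1) p2)

theorem apx_zero (k Q : ℕ) (hQ : 0 < Q) : apx (k, 0, Q) = 0 := by
  unfold apx
  rw [Nat.findGreatest_eq_zero_iff]
  intro n _ _
  have : 1 < 2 ^ Q := Nat.one_lt_two_pow hQ.ne'
  simpa using hQ.ne'

theorem apx_bounds (k P Q : ℕ) (hP : 0 < P) :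
    (apx (k, P, Q) : ℝ) ≤ 2 ^ k * (2 : ℝ) ^ (-(Q : ℝ) / P) ∧
    2 ^ k * (2 : ℝ) ^ (-(Q : ℝ) / P) ≤ apx (k, P, Q) + 1 := by
  set c : ℝ := (2 : ℝ) ^ (-(Q : ℝ) / P) with hc
  have hPr : (0 : ℝ) < P := by exact_mod_cast hP
  have hc0 : 0 < c := Real.rpow_pos_of_pos (by norm_num) _
  have hc1 : c ≤ 1 := Real.rpow_le_one_of_one_le_of_nonpos (by norm_num)
    (div_nonpos_of_nonpos_of_nonneg (by simp) hPr.le)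
  have hcP : c ^ P = ((2 : ℝ) ^ Q)⁻¹ := by
    rw [hc, ← Real.rpow_natCast, ← Real.rpow_mul (by norm_num), div_mul_cancel₀ _ hPr.ne',
      Real.rpow_neg (by norm_num), Real.rpow_natCast]
  have key : ∀ u : ℕ, 2 ^ Q * u ^ P ≤ (2 ^ k) ^ P ↔ (u : ℝ) ≤ 2 ^ k * c := by
    intro u
    rw [← pow_le_pow_iff_left₀ (a := (u : ℝ)) (by positivity) (by positivity) hP.ne', mul_pow, hcP,
      ← div_eq_mul_inv, le_div_iff₀ (by positivity), mul_comm]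
    exact_mod_cast Iff.rfl
  have h0 : 2 ^ Q * (apx (k, P, Q)) ^ P ≤ (2 ^ k) ^ P := by
    unfold apx
    refine Nat.findGreatest_spec (P := fun u => 2 ^ Q * u ^ P ≤ (2 ^ k) ^ P) (m := 0) (Nat.zero_le _) ?_
    simp [zero_pow hP.ne']
  refine ⟨(key _).1 h0, ?_⟩
  by_contra hlt
  push Not at hlt
  have h1 : 2 ^ Q * (apx (k, P, Q) + 1) ^ P ≤ (2 ^ k) ^ P := by
    rw [key]; push_cast; exact hlt.le
  by_cases hle : apx (k, P, Q) + 1 ≤ 2 ^ k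
  · have := Nat.le_findGreatest (P := fun u => 2 ^ Q * u ^ P ≤ (2 ^ k) ^ P) hle h1
    have e : apx (k, P, Q) = Nat.findGreatest (fun u => 2 ^ Q * u ^ P ≤ (2 ^ k) ^ P) (2 ^ k) := rfl
    omega
  · have h2 : (2 : ℝ) ^ k ≤ apx (k, P, Q) := by
      have : 2 ^ k ≤ apx (k, P, Q) := by omega
      exact_mod_cast this
    have : (2 : ℝ) ^ k * c ≤ 2 ^ k := by
      have h3 : (0 : ℝ) < 2 ^ k := by positivity
      nlinarith
    linarith

theorem exists_approx (T : ℝ) (hT0 : 0 < T) (hT1 : T < 1) (hTc : ComputableReal T) :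
    ∃ u : ℕ → ℕ, ∃ C : ℕ, Computable u ∧ 0 < C ∧ ∀ k, (u k : ℝ) ≤ 2 ^ k * (2 : ℝ) ^ (-1 / T) ∧
      2 ^ k * (2 : ℝ) ^ (-1 / T) ≤ u k + C := by
  obtain ⟨f, hf, hfT⟩ := hTc
  have h2k : Computable fun k : ℕ => 2 ^ k :=
    (pow_primrec.comp (Primrec.const 2) Primrec.id).to_comp
  let a : ℕ → ℕ := fun k => (f (2 ^ k)).num.toNat
  let d : ℕ → ℕ := fun k => (f (2 ^ k)).den
  have ha : Computable a := toNat_computable.comp (hf.comp h2k)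
  have hd : Computable d := den_computable.comp (hf.comp h2k)
  let P : ℕ → ℕ := fun k => a k * 2 ^ k - d k
  let Q : ℕ → ℕ := fun k => d k * 2 ^ k
  have hP : Computable P :=
    (Primrec.nat_sub.to_comp).comp (Primrec.nat_mul.to_comp.comp ha h2k) hd
  have hQ : Computable Q := Primrec.nat_mul.to_comp.comp hd h2k
  refine ⟨fun k => apx (k, P k, Q k), ⌈4 / T ^ 2⌉₊ + 1,
    apx_primrec.to_comp.comp (Computable.pair Computable.id (Computable.pair hP hQ)), by omega, ?_⟩
  intro k
  set b : ℝ := (2 : ℝ) ^ (-1 / T) with hb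
  have hb0 : 0 < b := Real.rpow_pos_of_pos (by norm_num) _
  have hb1 : b ≤ 1 := Real.rpow_le_one_of_one_le_of_nonpos (by norm_num)
    (div_nonpos_of_nonpos_of_nonneg (by norm_num) hT0.le)
  have hC : 4 / T ^ 2 ≤ (⌈4 / T ^ 2⌉₊ : ℝ) := Nat.le_ceil _
  have hC4 : 4 / T ≤ 4 / T ^ 2 := by
    apply div_le_div_of_nonneg_left (by norm_num) (by positivity); nlinarith
  have hk : (0 : ℝ) < 2 ^ k := by positivity
  have hTk := hfT (2 ^ k) Nat.one_le_two_pow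
  push_cast at hTk
  rw [abs_lt] at hTk
  have hdp : 0 < d k := (f (2 ^ k)).den_pos
  have hdr : (0 : ℝ) < d k := by exact_mod_cast hdp
  have hQp : 0 < Q k := by positivity
  have hfr : ((f (2 ^ k) : ℚ) : ℝ) = ((f (2 ^ k)).num : ℝ) / (d k : ℝ) := by
    rw [Rat.cast_def]
  set t : ℝ := (f (2 ^ k) : ℝ) - 1 / 2 ^ k with ht
  have htT : t < T := by rw [ht]; linarith [hTk.1, hTk.2]
  have hTt : T - t < 2 / 2 ^ k := by
    have : (2 : ℝ) / 2 ^ k = 1 / 2 ^ k + 1 / 2 ^ k := by ring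
    rw [ht, this]; linarith [hTk.1, hTk.2]
  have hnum : ((f (2 ^ k)).num : ℝ) ≤ a k := by
    have : (f (2 ^ k)).num ≤ (a k : ℤ) := Int.self_le_toNat _
    exact_mod_cast this
  have smallt : t < T / 2 → 2 ^ k ≤ 4 / T := by
    intro h
    have h1 : T / 2 < 2 / 2 ^ k := by linarith
    rw [lt_div_iff₀ hk] at h1
    rw [le_div_iff₀ hT0]; linarith
  push_cast
  rcases Nat.eq_zero_or_pos (P k) with h0 | hpos
  · rw [h0, apx_zero _ _ hQp]
    refine ⟨by simp; positivity, ?_⟩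
    have h1 : a k * 2 ^ k ≤ d k := by
      simp only [P] at h0; omega
    have h2 : (a k : ℝ) * 2 ^ k ≤ d k := by exact_mod_cast h1
    have h3 : t ≤ 0 := by
      rw [ht, hfr, sub_nonpos, div_le_div_iff₀ hdr hk]
      nlinarith
    have := smallt (by linarith)
    have h5 : 2 ^ k * b ≤ 2 ^ k := by nlinarith
    simp only [Nat.cast_zero]; linarith
  · obtain ⟨hl, hu⟩ := apx_bounds k (P k) (Q k) hpos
    have hPr : (0 : ℝ) < P k := by exact_mod_cast hpos
    have hQr : (0 : ℝ) < Q k := by exact_mod_cast hQp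
    have hale : d k < a k * 2 ^ k := by simp only [P] at hpos; omega
    have hap : 0 < a k := by
      rcases Nat.eq_zero_or_pos (a k) with h | h
      · rw [h] at hale; simp at hale
      · exact h
    have hanum : ((f (2 ^ k)).num : ℝ) = a k := by
      have : (f (2 ^ k)).num = (a k : ℤ) := by simp only [a] at hap ⊢; omega
      exact_mod_cast this
    have htPQ : t = P k / Q k := by
      have e1 : (P k : ℝ) = a k * 2 ^ k - d k := by
        simp only [P]; rw [Nat.cast_sub hale.le]; push_cast; ring
      have e2 : (Q k : ℝ) = d k * 2 ^ k := by simp [Q]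
      rw [ht, hfr, hanum, e1, e2]
      field_simp
    have htp : 0 < t := by rw [htPQ]; positivity
    have hexp : -(Q k : ℝ) / P k = -1 / t := by
      rw [htPQ]; field_simp
    rw [hexp] at hl hu
    set c : ℝ := (2 : ℝ) ^ (-1 / t) with hc
    have hc0 : 0 < c := Real.rpow_pos_of_pos (by norm_num) _
    have hcb : c ≤ b := by
      rw [hc, hb]
      apply Real.rpow_le_rpow_of_exponent_le (by norm_num)
      rw [div_le_div_iff₀ htp hT0]; linarith
    refine ⟨hl.trans (by gcongr), ?_⟩
    suffices 2 ^ k * (b - c) ≤ 4 / T ^ 2 by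
      rw [mul_sub] at this; linarith
    by_cases hs : t < T / 2
    · have := smallt hs
      have h5 : 2 ^ k * (b - c) ≤ 2 ^ k := by nlinarith
      linarith
    · push Not at hs
      have h6 : b - c ≤ 1 / t - 1 / T := by
        set z := 1 / t - 1 / T with hz
        have hz0 : 0 ≤ z := by
          rw [hz, sub_nonneg]; exact one_div_le_one_div_of_le htp htT.le
        have e : c = b * (2 : ℝ) ^ (-z) := by
          rw [hc, hb, ← Real.rpow_add (by norm_num)]
          congr 1; rw [hz]; ring
        have h7 : 1 - z ≤ (2 : ℝ) ^ (-z) := by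
          rw [Real.rpow_def_of_pos (by norm_num)]
          have := Real.add_one_le_exp (Real.log 2 * -z)
          have hl2 : Real.log 2 ≤ 1 := by have := Real.log_two_lt_d9; linarith
          have : Real.log 2 * z ≤ z := by nlinarith
          linarith
        rw [e]
        nlinarith
      have h7 : 1 / t - 1 / T = (T - t) / (t * T) := by field_simp
      have h8 : (T - t) / (t * T) ≤ (2 / 2 ^ k) / (T / 2 * T) := by gcongr
      calc 2 ^ k * (b - c) ≤ 2 ^ k * ((2 / 2 ^ k) / (T / 2 * T)) := by
            gcongr; linarith
        _ = 4 / T ^ 2 := by field_simp; ring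

end EnergyAux

namespace EnergyAux

theorem bounded_geom (j : ℕ) (r : ℝ) (h0 : 0 ≤ r) (h1 : r < 1) :
    ∃ M : ℝ, 0 ≤ M ∧ ∀ n : ℕ, (n : ℝ) ^ j * r ^ n ≤ M := by
  have h := tendsto_pow_const_mul_const_pow_of_lt_one j h0 h1
  obtain ⟨M, hM⟩ := h.bddAbove_range
  refine ⟨max M 0, le_max_right _ _, fun n => le_max_of_le_left (hM ⟨n, rfl⟩)⟩

section
variable {ι : Type*} (ℓ : ι → ℕ)

theorem kraft_summable (hK : ∀ s : Finset ι, ∑ p ∈ s, (1 / 2 : ℝ) ^ ℓ p ≤ 1) :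
    Summable fun p => (1 / 2 : ℝ) ^ ℓ p :=
  summable_of_sum_le (fun p => by positivity) hK

theorem poly_summable (hK : ∀ s : Finset ι, ∑ p ∈ s, (1 / 2 : ℝ) ^ ℓ p ≤ 1)
    (j : ℕ) (c : ℝ) (h0 : 0 ≤ c) (h1 : c < 1 / 2) :
    Summable fun p => (ℓ p : ℝ) ^ j * c ^ ℓ p := by
  obtain ⟨M, hM0, hM⟩ := bounded_geom j (2 * c) (by linarith) (by linarith)
  refine Summable.of_nonneg_of_le (fun p => by positivity) (fun p => ?_)
    ((kraft_summable ℓ hK).mul_left M)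
  have e : (ℓ p : ℝ) ^ j * c ^ ℓ p = ((ℓ p : ℝ) ^ j * (2 * c) ^ ℓ p) * (1 / 2) ^ ℓ p := by
    rw [mul_assoc, ← mul_pow]; congr 2; ring
  rw [e]
  exact mul_le_mul_of_nonneg_right (hM _) (by positivity)

theorem finite_le (hK : ∀ s : Finset ι, ∑ p ∈ s, (1 / 2 : ℝ) ^ ℓ p ≤ 1) (L : ℕ) :
    {p | ℓ p ≤ L}.Finite := by
  have h := (kraft_summable ℓ hK).tendsto_cofinite_zero
  have h2 := h.eventually (gt_mem_nhds (show (0 : ℝ) < (1 / 2) ^ L by positivity))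
  refine (Filter.eventually_cofinite.1 h2).subset ?_
  intro p hp hlt
  exact absurd hlt (not_lt.2 (pow_le_pow_of_le_one (by norm_num) (by norm_num) hp))

theorem pow_sub_pow_bound (a c : ℝ) (n : ℕ) (ha : 0 ≤ a) (hac : a ≤ c) (hc : 0 < c) :
    c ^ n - a ^ n ≤ (c - a) * ((n : ℝ) * c ^ n / c) := by
  induction n with
  | zero => simp
  | succ n ih =>
    have h1 : a ^ n ≤ c ^ n := by gcongr
    have e : ((n + 1 : ℕ) : ℝ) * c ^ (n + 1) / c = (n : ℝ) * c ^ n + c ^ n := by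
      push_cast; field_simp; ring
    have e2 : (n : ℝ) * c ^ n / c * c = n * c ^ n := by field_simp
    rw [e]
    calc c ^ (n + 1) - a ^ (n + 1) = c * (c ^ n - a ^ n) + (c - a) * a ^ n := by ring
      _ ≤ c * ((c - a) * ((n : ℝ) * c ^ n / c)) + (c - a) * c ^ n := by
          have : 0 ≤ c - a := by linarith
          gcongr
      _ = (c - a) * ((n : ℝ) * c ^ n / c * c) + (c - a) * c ^ n := by ring
      _ = _ := by rw [e2]; ring

theorem pow_sub_pow_bound' (a b c : ℝ) (n : ℕ) (ha : 0 ≤ a) (hac : a ≤ c) (hb : 0 < b) (hbc : b ≤ c) :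
    c ^ n - a ^ n ≤ (c - a) * ((n : ℝ) * c ^ n / b) := by
  refine (pow_sub_pow_bound a c n ha hac (hb.trans_le hbc)).trans ?_
  have : 0 ≤ c - a := by linarith
  have : 0 ≤ c := by linarith
  gcongr

set_option maxHeartbeats 1600000 in
theorem main_analysis (hK : ∀ s : Finset ι, ∑ p ∈ s, (1 / 2 : ℝ) ^ ℓ p ≤ 1) [Nonempty ι]
    (b : ℝ) (hb0 : 0 < b) (hb1 : b < 1 / 2)
    (S : ℕ → Finset ι) (hS : Monotone S) (hex : ∀ p, ∃ k, p ∈ S k)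
    (u : ℕ → ℕ) (C : ℕ) (hu : ∀ k, (u k : ℝ) ≤ 2 ^ k * b ∧ 2 ^ k * b ≤ u k + C)
    (W Z E : ℝ) (hW : W = ∑' p, (ℓ p : ℝ) * b ^ ℓ p) (hZ : Z = ∑' p, b ^ ℓ p) (hE : E = W / Z) :
    0 < Z ∧ 0 ≤ E ∧ ∃ k0 : ℕ, ∃ K : ℝ, 0 < K ∧ ∀ k ≥ k0,
      (0 < ∑ p ∈ S k, (((u k + C : ℕ) : ℝ) / 2 ^ k) ^ ℓ p) ∧
      ((∑ p ∈ S k, (ℓ p : ℝ) * ((u k : ℝ) / 2 ^ k) ^ ℓ p) /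
        (∑ p ∈ S k, (((u k + C : ℕ) : ℝ) / 2 ^ k) ^ ℓ p) ≤ E) ∧
      (∀ p ∉ S k, 1 ≤ ℓ p ∧ (ℓ p : ℝ) * b ^ ℓ p ≤ K * (E -
        (∑ p ∈ S k, (ℓ p : ℝ) * ((u k : ℝ) / 2 ^ k) ^ ℓ p) /
        (∑ p ∈ S k, (((u k + C : ℕ) : ℝ) / 2 ^ k) ^ ℓ p))) ∧
      (E - (∑ p ∈ S k, (ℓ p : ℝ) * ((u k : ℝ) / 2 ^ k) ^ ℓ p) /
        (∑ p ∈ S k, (((u k + C : ℕ) : ℝ) / 2 ^ k) ^ ℓ p) ≤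
          K * (1 / 2 ^ k + (W - ∑ p ∈ S k, (ℓ p : ℝ) * b ^ ℓ p))) := by
  classical
  have sZ : Summable fun p => b ^ ℓ p := by
    simpa using poly_summable ℓ hK 0 b hb0.le hb1
  have sW : Summable fun p => (ℓ p : ℝ) * b ^ ℓ p := by
    simpa using poly_summable ℓ hK 1 b hb0.le hb1
  have sV : Summable fun p => (ℓ p : ℝ) ^ 2 * b ^ ℓ p := poly_summable ℓ hK 2 b hb0.le hb1
  set c : ℝ := (b + 1 / 2) / 2 with hc
  have hcb : b < c := by rw [hc]; linarith
  have sc : Summable fun p => (ℓ p : ℝ) * c ^ ℓ p := by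
    simpa using poly_summable ℓ hK 1 c (by linarith) (by rw [hc]; linarith)
  have hZ0 : 0 < Z := by
    rw [hZ]
    exact sZ.tsum_pos (fun p => by positivity) (Classical.arbitrary ι) (by positivity)
  have hW0 : 0 ≤ W := by rw [hW]; exact tsum_nonneg fun p => by positivity
  have hE0 : 0 ≤ E := by rw [hE]; positivity
  have hWE : W = E * Z := by rw [hE]; field_simp
  refine ⟨hZ0, hE0, ?_⟩
  -- exhausting finite sets
  have hfin : ∀ F : Finset ι, ∃ k, F ⊆ S k := by
    intro F
    induction F using Finset.induction_on with
    | empty => exact ⟨0, by simp⟩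
    | insert p F _ ih =>
      obtain ⟨k1, h1⟩ := ih
      obtain ⟨k2, h2⟩ := hex p
      refine ⟨max k1 k2, Finset.insert_subset (hS (le_max_right _ _) h2)
        (h1.trans (hS (le_max_left _ _)))⟩
  obtain ⟨k1, hk1⟩ := hfin (insert (Classical.arbitrary ι) (finite_le ℓ hK (⌈2 * E⌉₊ + 1)).toFinset)
  obtain ⟨k2, hk2⟩ : ∃ k2 : ℕ, ∀ k ≥ k2, (C : ℝ) / 2 ^ k ≤ c - b := by
    have h1 : Tendsto (fun k : ℕ => (C : ℝ) * (1 / 2) ^ k) atTop (nhds ((C : ℝ) * 0)) :=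
      (tendsto_pow_atTop_nhds_zero_of_lt_one (by norm_num) (by norm_num)).const_mul _
    rw [mul_zero] at h1
    obtain ⟨k2, h2⟩ := eventually_atTop.1 (h1.eventually (gt_mem_nhds (sub_pos.2 hcb)))
    refine ⟨k2, fun k hk => ?_⟩
    have := h2 k hk
    rw [one_div, inv_pow, ← div_eq_mul_inv] at this
    exact this.le
  set z0 : ℝ := b ^ ℓ (Classical.arbitrary ι) with hz0
  have hz0p : 0 < z0 := by positivity
  set V : ℝ := ∑' p, (ℓ p : ℝ) ^ 2 * b ^ ℓ p with hV
  set V' : ℝ := ∑' p, (ℓ p : ℝ) * c ^ ℓ p with hV'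
  have hV0 : 0 ≤ V := tsum_nonneg fun p => by positivity
  have hc0 : 0 < c := by linarith
  have hV'0 : 0 ≤ V' := tsum_nonneg fun p => by positivity
  set K1 : ℝ := (C * (E * (V' / b) + V / b) + 1) / z0 with hK1
  have hK1p : 0 < K1 := by positivity
  refine ⟨max k1 k2, 2 * Z + K1, by positivity, fun k hk => ?_⟩
  have hkk1 : k1 ≤ k := (le_max_left _ _).trans hk
  have hkk2 : k2 ≤ k := (le_max_right _ _).trans hk
  have hsub := hk1.trans (hS hkk1)
  have harb : Classical.arbitrary ι ∈ S k := hsub (Finset.mem_insert_self _ _)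
  have hout : ∀ p ∉ S k, 1 ≤ ℓ p ∧ 2 * E ≤ ℓ p := by
    intro p hp
    have h1 : ¬ ℓ p ≤ ⌈2 * E⌉₊ + 1 := by
      intro h
      apply hp
      apply hsub
      apply Finset.mem_insert_of_mem
      simpa using h
    push Not at h1
    refine ⟨by omega, (Nat.le_ceil _).trans ?_⟩
    exact_mod_cast (by omega : ⌈2 * E⌉₊ ≤ ℓ p)
  have hpk : (0 : ℝ) < 2 ^ k := by positivity
  obtain ⟨hu1, hu2⟩ := hu k
  set x : ℝ := (u k : ℝ) / 2 ^ k with hx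
  set y : ℝ := ((u k + C : ℕ) : ℝ) / 2 ^ k with hy
  have hx0 : 0 ≤ x := by positivity
  have hxb : x ≤ b := by rw [hx, div_le_iff₀ hpk]; linarith
  have hby : b ≤ y := by rw [hy, le_div_iff₀ hpk]; push_cast; linarith
  have hyx : y = x + C / 2 ^ k := by rw [hy, hx]; push_cast; ring
  have hyc : y ≤ c := by have := hk2 k hkk2; linarith
  have hbx : b - x ≤ C / 2 ^ k := by linarith
  have hyb : y - b ≤ C / 2 ^ k := by linarith
  set N := ∑ p ∈ S k, (ℓ p : ℝ) * x ^ ℓ p with hN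
  set D := ∑ p ∈ S k, y ^ ℓ p with hD
  set WS := ∑ p ∈ S k, (ℓ p : ℝ) * b ^ ℓ p with hWS
  set ZS := ∑ p ∈ S k, b ^ ℓ p with hZS
  have hZSz : z0 ≤ ZS := by
    rw [hZS]
    exact Finset.single_le_sum (f := fun p => b ^ ℓ p) (fun p _ => by positivity) harb
  have hZSp : 0 < ZS := by linarith
  have hZSD : ZS ≤ D := Finset.sum_le_sum fun p _ => by gcongr
  have hZSZ : ZS ≤ Z := by rw [hZ]; exact sZ.sum_le_tsum _ fun p _ => by positivity
  have hDp : 0 < D := by linarith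
  have hN0 : 0 ≤ N := Finset.sum_nonneg fun p _ => by positivity
  have hNWS : N ≤ WS := Finset.sum_le_sum fun p _ => by gcongr
  have hWSW : WS ≤ W := by rw [hW]; exact sW.sum_le_tsum _ fun p _ => by positivity
  -- the function h
  have sh : Summable fun p => ((ℓ p : ℝ) - E) * b ^ ℓ p := by
    simpa [sub_mul] using sW.sub (sZ.mul_left E)
  have hh : ∑' p, ((ℓ p : ℝ) - E) * b ^ ℓ p = 0 := by
    have : (fun p => ((ℓ p : ℝ) - E) * b ^ ℓ p) = fun p => (ℓ p : ℝ) * b ^ ℓ p - E * b ^ ℓ p := by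
      funext p; ring
    rw [this, sW.tsum_sub (sZ.mul_left E), tsum_mul_left, ← hW, ← hZ, hWE]; ring
  have hhS : ∑ p ∈ S k, ((ℓ p : ℝ) - E) * b ^ ℓ p = WS - E * ZS := by
    simp only [sub_mul, Finset.sum_sub_distrib, ← Finset.mul_sum, hWS, hZS]
  have hpos : ∀ p ∉ S k, 0 ≤ ((ℓ p : ℝ) - E) * b ^ ℓ p := by
    intro p hp
    have := (hout p hp).2
    have : 0 ≤ (ℓ p : ℝ) - E := by linarith
    positivity
  have hA : WS ≤ E * ZS := by
    have := sh.sum_le_tsum (S k) hpos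
    rw [hh, hhS] at this; linarith
  have hNZ : N / D ≤ WS / ZS := div_le_div₀ (hN0.trans hNWS) hNWS hZSp hZSD
  have hWZE : WS / ZS ≤ E := by rw [div_le_iff₀ hZSp]; exact hA
  refine ⟨hDp, hNZ.trans hWZE, ?_, ?_⟩
  · intro p hp
    refine ⟨(hout p hp).1, ?_⟩
    have h1 := sh.sum_le_tsum (insert p (S k)) (fun q hq => hpos q (fun h => hq (Finset.mem_insert_of_mem h)))
    rw [Finset.sum_insert hp, hh, hhS] at h1
    have h2 : E * ZS - WS ≤ Z * (E - N / D) := by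
      have h3 : E - WS / ZS ≤ E - N / D := by linarith
      have h4 : E * ZS - WS = ZS * (E - WS / ZS) := by field_simp
      rw [h4]
      have : 0 ≤ E - WS / ZS := by linarith
      gcongr
    have h5 : (ℓ p : ℝ) / 2 * b ^ ℓ p ≤ ((ℓ p : ℝ) - E) * b ^ ℓ p := by
      have := (hout p hp).2
      gcongr; linarith
    have h6 : 0 ≤ K1 * (E - N / D) := mul_nonneg hK1p.le (by linarith)
    nlinarith
  · have h1 : D - ZS ≤ (C / 2 ^ k) * (V' / b) := by
      calc D - ZS = ∑ p ∈ S k, (y ^ ℓ p - b ^ ℓ p) := by rw [Finset.sum_sub_distrib]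
        _ ≤ ∑ p ∈ S k, (C / 2 ^ k) * ((ℓ p : ℝ) * c ^ ℓ p / b) := by
            refine Finset.sum_le_sum fun p _ => ?_
            refine (pow_sub_pow_bound' b b y (ℓ p) hb0.le hby hb0 hby).trans ?_
            have : 0 ≤ y - b := by linarith
            have : 0 ≤ y := by linarith
            gcongr
        _ = (C / 2 ^ k) * ((∑ p ∈ S k, (ℓ p : ℝ) * c ^ ℓ p) / b) := by
            rw [← Finset.mul_sum, Finset.sum_div]
        _ ≤ _ := by
            gcongr
            exact sc.sum_le_tsum _ fun p _ => by positivity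
    have h2 : WS - N ≤ (C / 2 ^ k) * (V / b) := by
      calc WS - N = ∑ p ∈ S k, (ℓ p : ℝ) * (b ^ ℓ p - x ^ ℓ p) := by
            simp only [mul_sub, Finset.sum_sub_distrib, hWS, hN]
        _ ≤ ∑ p ∈ S k, (C / 2 ^ k) * ((ℓ p : ℝ) ^ 2 * b ^ ℓ p / b) := by
            refine Finset.sum_le_sum fun p _ => ?_
            have h3 := (pow_sub_pow_bound x b (ℓ p) hx0 hxb hb0)
            calc (ℓ p : ℝ) * (b ^ ℓ p - x ^ ℓ p) ≤ (ℓ p : ℝ) * ((C / 2 ^ k) * ((ℓ p : ℝ) * b ^ ℓ p / b)) := by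
                  gcongr
                  refine h3.trans ?_
                  gcongr
              _ = _ := by ring
        _ = (C / 2 ^ k) * ((∑ p ∈ S k, (ℓ p : ℝ) ^ 2 * b ^ ℓ p) / b) := by
            rw [← Finset.mul_sum, Finset.sum_div]
        _ ≤ _ := by
            gcongr
            exact sV.sum_le_tsum _ fun p _ => by positivity
    have h3 : E * ZS ≤ W := by rw [hWE]; gcongr
    have h4 : E - N / D = (E * D - N) / D := by field_simp
    have hG : 0 ≤ (C : ℝ) * (E * (V' / b) + V / b) := by positivity
    have h5 : E * D - N ≤ (C * (E * (V' / b) + V / b) + 1) * (1 / 2 ^ k + (W - WS)) := by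
      have h6 : E * (D - ZS) ≤ E * ((C / 2 ^ k) * (V' / b)) := by gcongr
      have h7 : 0 ≤ W - WS := by linarith
      have h8 : (0 : ℝ) ≤ 1 / 2 ^ k := by positivity
      calc E * D - N = E * (D - ZS) + (WS - N) + (E * ZS - WS) := by ring
        _ ≤ E * ((C / 2 ^ k) * (V' / b)) + (C / 2 ^ k) * (V / b) + (W - WS) := by linarith
        _ = (C * (E * (V' / b) + V / b)) * (1 / 2 ^ k) + (W - WS) := by ring
        _ ≤ _ := by nlinarith
    have h7 : 0 ≤ 1 / 2 ^ k + (W - WS) := by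
      have : (0 : ℝ) ≤ 1 / 2 ^ k := by positivity
      linarith
    rw [h4]
    calc (E * D - N) / D ≤ ((C * (E * (V' / b) + V / b) + 1) * (1 / 2 ^ k + (W - WS))) / D := by gcongr
      _ ≤ ((C * (E * (V' / b) + V / b) + 1) * (1 / 2 ^ k + (W - WS))) / z0 := by
          have : 0 ≤ (C * (E * (V' / b) + V / b) + 1) * (1 / 2 ^ k + (W - WS)) := by positivity
          gcongr
          linarith
      _ = K1 * (1 / 2 ^ k + (W - WS)) := by rw [hK1]; ring
      _ ≤ _ := by gcongr; linarith

theorem tail_bound (hK : ∀ s : Finset ι, ∑ p ∈ s, (1 / 2 : ℝ) ^ ℓ p ≤ 1)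
    (b β : ℝ) (hb0 : 0 < b) (hbβ : b < β) (hβ : β ≤ 1 / 2) :
    ∃ K : ℝ, 0 < K ∧ ∀ (S : Finset ι) (m : ℕ),
      (∑' p, (1 / 2 : ℝ) ^ ℓ p) - ∑ p ∈ S, (1 / 2 : ℝ) ^ ℓ p ≤ (1 / 2) ^ m →
      (∑' p, (ℓ p : ℝ) * b ^ ℓ p) - ∑ p ∈ S, (ℓ p : ℝ) * b ^ ℓ p ≤ K * β ^ m := by
  classical
  have hβ0 : 0 < β := by linarith
  obtain ⟨M, hM0, hM⟩ := bounded_geom 1 (b / β) (by positivity) ((div_lt_one hβ0).2 hbβ)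
  have sW : Summable fun p => (ℓ p : ℝ) * b ^ ℓ p := by
    simpa using poly_summable ℓ hK 1 b hb0.le (by linarith)
  have sO := kraft_summable ℓ hK
  refine ⟨M + 1, by linarith, fun S m hS => ?_⟩
  have e1 := sW.sum_add_tsum_compl (s := S)
  have e2 := sO.sum_add_tsum_compl (s := S)
  rw [← e1, add_sub_cancel_left]
  rw [← e2, add_sub_cancel_left] at hS
  have sO' : Summable fun p : ↥((S : Set ι)ᶜ) => (1 / 2 : ℝ) ^ ℓ p := sO.subtype _
  have sW' : Summable fun p : ↥((S : Set ι)ᶜ) => (ℓ p : ℝ) * b ^ ℓ p := sW.subtype _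
  have hle : ∀ p : ↥((S : Set ι)ᶜ), (ℓ p : ℝ) * b ^ ℓ p ≤ (M * (2 * β) ^ m) * (1 / 2 : ℝ) ^ ℓ p := by
    intro p
    have h1 : (1 / 2 : ℝ) ^ ℓ p ≤ (1 / 2) ^ m :=
      (sO'.le_tsum p fun q _ => by positivity).trans hS
    have h2 : m ≤ ℓ p := by
      by_contra hlt
      push Not at hlt
      exact absurd h1 (not_le.2 (pow_lt_pow_right_of_lt_one₀ (by norm_num) (by norm_num) hlt))
    have h3 : (2 * β) ^ ℓ p ≤ (2 * β) ^ m := pow_le_pow_of_le_one (by positivity) (by linarith) h2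
    have h4 := hM (ℓ p)
    rw [pow_one] at h4
    calc (ℓ p : ℝ) * b ^ ℓ p = ((ℓ p : ℝ) * (b / β) ^ ℓ p) * (2 * β) ^ ℓ p * (1 / 2) ^ ℓ p := by
          rw [mul_assoc, mul_assoc, ← mul_pow, ← mul_pow]
          congr 2; field_simp
      _ ≤ M * (2 * β) ^ m * (1 / 2) ^ ℓ p := by gcongr
  calc ∑' p : ↥((S : Set ι)ᶜ), (ℓ p : ℝ) * b ^ ℓ p
      ≤ ∑' p : ↥((S : Set ι)ᶜ), (M * (2 * β) ^ m) * (1 / 2 : ℝ) ^ ℓ p :=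
        sW'.tsum_le_tsum hle (sO'.mul_left _)
    _ = (M * (2 * β) ^ m) * ∑' p : ↥((S : Set ι)ᶜ), (1 / 2 : ℝ) ^ ℓ p := tsum_mul_left
    _ ≤ (M * (2 * β) ^ m) * (1 / 2) ^ m := by gcongr
    _ = M * β ^ m := by rw [mul_assoc, ← mul_pow]; congr 2; ring
    _ ≤ _ := by gcongr; linarith

end

theorem prefix_kraft (A : Set (List Bool)) (hA : PrefixFree A) (s : Finset A) :
    ∑ p ∈ s, (1 / 2 : ℝ) ^ (p : List Bool).length ≤ 1 := by
  classical
  have e : ∑ p ∈ s, (1 / 2 : ℝ) ^ (p : List Bool).length =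
      ∑ p ∈ s.image Subtype.val, (1 / 2 : ℝ) ^ p.length := by
    rw [Finset.sum_image (fun a _ b _ h => Subtype.ext h)]
  rw [e]
  set F := s.image Subtype.val with hF
  have hFA : ∀ p ∈ F, p ∈ A := by
    intro p hp
    rw [hF, Finset.mem_image] at hp
    obtain ⟨q, _, rfl⟩ := hp
    exact q.2
  by_cases hnil : [] ∈ F
  · have : F = {[]} := by
      ext p
      rw [Finset.mem_singleton]
      constructor
      · intro hp
        exact (hA [] (hFA _ hnil) p (hFA _ hp) List.nil_prefix).symm
      · rintro rfl; exact hnil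
    rw [this]; simp
  · have hud : InformationTheory.UniquelyDecodable (F : Set (List Bool)) := by
      intro L1
      induction L1 with
      | nil =>
        intro L2 _ h2 h
        cases L2 with
        | nil => rfl
        | cons w L2 =>
          have : w = [] := by simp at h; exact h.1
          exact absurd (this ▸ h2 w (by simp)) hnil
      | cons v L1 ih =>
        intro L2 h1 h2 h
        cases L2 with
        | nil =>
          have : v = [] := by simp at h; exact h.1
          exact absurd (this ▸ h1 v (by simp)) hnil
        | cons w L2 =>
          simp only [List.flatten_cons] at h
          have hv : v ∈ A := hFA _ (h1 v (by simp))
          have hw : w ∈ A := hFA _ (h2 w (by simp))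
          have hvw : v = w := by
            rcases List.append_eq_append_iff.1 h with ⟨t, ht, _⟩ | ⟨t, ht, _⟩
            · exact hA v hv w hw ⟨t, ht.symm⟩
            · exact (hA w hw v hv ⟨t, ht.symm⟩).symm
          subst hvw
          rw [List.append_cancel_left_eq] at h
          rw [ih L2 (fun q hq => h1 q (by simp [hq])) (fun q hq => h2 q (by simp [hq])) h]
    have := InformationTheory.kraft_mcmillan_inequality hud
    simpa using this

end EnergyAux

namespace EnergyAux

theorem list_sum_primrec {α β : Type*} [Primcodable α] [Primcodable β] {l : α → List β} {g : α → β → ℕ}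
    (hl : Primrec l) (hg : Primrec₂ g) : Primrec fun a => ((l a).map (g a)).sum := by
  have h : Primrec fun a : α => ((l a).map (g a)).foldl (fun s b => s + b) 0 :=
    Primrec.list_foldl (Primrec.list_map hl hg) (Primrec.const 0)
      ((Primrec.nat_add.comp (Primrec.fst.comp Primrec.snd) (Primrec.snd.comp Primrec.snd)).to₂)
  refine h.of_eq fun a => ?_
  rw [List.sum_eq_foldl]

theorem enum_exists (f : List Bool →. List Bool) (hf : Partrec f) :
    ∃ (Sl : ℕ → List (List Bool)) (B : ℕ → ℕ), Primrec Sl ∧ Primrec B ∧ (∀ k, (Sl k).Nodup) ∧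
      (∀ k, ∀ p ∈ Sl k, (f p).Dom ∧ p.length ≤ k ∧ ∀ s ∈ f p, s.length < B k) ∧
      (∀ j k, j ≤ k → Sl j ⊆ Sl k) ∧ ∀ p, (f p).Dom → ∃ k, p ∈ Sl k := by
  obtain ⟨c, hc⟩ := Nat.Partrec.Code.exists_code.1 hf
  have hev : Primrec₂ fun (k n : ℕ) => Nat.Partrec.Code.evaln k c n :=
    Nat.Partrec.Code.primrec_evaln.comp
      (Primrec.pair (Primrec.pair Primrec.fst (Primrec.const c)) Primrec.snd)
  have hmem : ∀ (p s : List Bool), s ∈ f p ↔ Encodable.encode s ∈ Nat.Partrec.Code.eval c (Encodable.encode p) := by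
    intro p s
    rw [hc]
    simp
  have hmem2 : ∀ (p : List Bool) (x : ℕ), x ∈ Nat.Partrec.Code.eval c (Encodable.encode p) →
      ∃ s, s ∈ f p ∧ Encodable.encode s = x := by
    intro p x
    rw [hc]
    simp
  let g : ℕ → ℕ → Option (List Bool) := fun k n =>
    (Nat.Partrec.Code.evaln k c n).bind (fun _ => Encodable.decode₂ (List Bool) n)
  have hg : Primrec₂ g :=
    Primrec.option_bind hev ((Primrec.decode₂.comp (Primrec.snd.comp Primrec.fst)).to₂)
  have hgm : ∀ k n p, p ∈ g k n ↔ (∃ x, x ∈ Nat.Partrec.Code.evaln k c n) ∧ Encodable.encode p = n := by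
    intro k n p
    simp only [g, Option.mem_def, Option.bind_eq_some_iff]
    constructor
    · rintro ⟨x, hx, hd⟩
      exact ⟨⟨x, hx⟩, Encodable.mem_decode₂.1 hd⟩
    · rintro ⟨⟨x, hx⟩, rfl⟩
      exact ⟨x, hx, Encodable.mem_decode₂.2 rfl⟩
  let Sl : ℕ → List (List Bool) := fun k => (List.range k).filterMap (g k)
  have hSm : ∀ k p, p ∈ Sl k ↔ ∃ x, x ∈ Nat.Partrec.Code.evaln k c (Encodable.encode p) := by
    intro k p
    simp only [Sl, List.mem_filterMap, List.mem_range]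
    constructor
    · rintro ⟨n, hn, h⟩
      obtain ⟨h1, rfl⟩ := (hgm k n p).1 h
      exact h1
    · rintro ⟨x, hx⟩
      exact ⟨_, Nat.Partrec.Code.evaln_bound hx, (hgm k _ p).2 ⟨⟨x, hx⟩, rfl⟩⟩
  let B : ℕ → ℕ := fun k => ((List.range k).map (fun n => (Nat.Partrec.Code.evaln k c n).getD 0)).sum + 1
  refine ⟨Sl, B, Primrec.listFilterMap Primrec.list_range hg, ?_, ?_, ?_, ?_, ?_⟩
  · exact Primrec.succ.comp (list_sum_primrec Primrec.list_range
      (Primrec.option_getD.comp₂ hev (Primrec₂.const 0)))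
  · intro k
    refine List.Nodup.filterMap ?_ List.nodup_range
    intro a a' b hb hb'
    have h1 := ((hgm k a b).1 hb).2
    have h2 := ((hgm k a' b).1 hb').2
    omega
  · intro k p hp
    obtain ⟨x, hx⟩ := (hSm k p).1 hp
    obtain ⟨s, hs, hsx⟩ := hmem2 p x (Nat.Partrec.Code.evaln_sound hx)
    have hlt := Nat.Partrec.Code.evaln_bound hx
    refine ⟨Part.dom_iff_mem.2 ⟨s, hs⟩, (Encodable.length_le_encode p).trans hlt.le, ?_⟩
    intro s' hs'
    obtain rfl := Part.mem_unique hs hs'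
    refine Nat.lt_succ_of_le ((Encodable.length_le_encode s).trans ?_)
    refine List.single_le_sum (fun _ _ => Nat.zero_le _) _ ?_
    rw [List.mem_map]
    refine ⟨Encodable.encode p, List.mem_range.2 hlt, ?_⟩
    rw [Option.mem_def.1 hx, hsx]; rfl
  · intro j k hjk p hp
    obtain ⟨x, hx⟩ := (hSm j p).1 hp
    exact (hSm k p).2 ⟨x, Nat.Partrec.Code.evaln_mono hjk hx⟩
  · intro p hp
    obtain ⟨s, hs⟩ := Part.dom_iff_mem.1 hp
    obtain ⟨k, hk⟩ := Nat.Partrec.Code.evaln_complete.1 ((hmem p s).1 hs)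
    exact ⟨k, (hSm k p).2 ⟨_, hk⟩⟩

end EnergyAux

namespace EnergyAux

/-- the natural-number data of the approximation process -/
structure Data (U : Computer) (b W E : ℝ) where
  num : ℕ → ℕ
  den : ℕ → ℕ
  om : ℕ → ℕ
  B : ℕ → ℕ
  S : ℕ → Finset U.domain
  k0 : ℕ
  K : ℝ
  hnum : Computable num
  hden : Computable den
  hom : Computable om
  hB : Computable B
  mono : Monotone S
  exh : ∀ p, ∃ k, p ∈ S k
  bound : ∀ k, ∀ p ∈ S k, ∀ s ∈ U.f p, s.length < B k
  om_eq : ∀ k, (om k : ℝ) / 2 ^ k = ∑ p ∈ S k, (1 / 2 : ℝ) ^ (p : List Bool).length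
  K_pos : 0 < K
  den_pos : ∀ k ≥ k0, 0 < den k
  le_E : ∀ k ≥ k0, (num k : ℝ) / den k ≤ E
  out : ∀ k ≥ k0, ∀ p ∉ S k, 1 ≤ (p : List Bool).length ∧
    ((p : List Bool).length : ℝ) * b ^ (p : List Bool).length ≤ K * (E - (num k : ℝ) / den k)
  err : ∀ k ≥ k0, E - (num k : ℝ) / den k ≤
    K * (1 / 2 ^ k + (W - ∑ p ∈ S k, ((p : List Bool).length : ℝ) * b ^ (p : List Bool).length))

theorem data_exists (U : Computer) (hne : Nonempty U.domain) (T : ℝ) (hT0 : 0 < T) (hT1 : T < 1)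
    (hTc : ComputableReal T) (b W Z E : ℝ) (hb : b = (2 : ℝ) ^ (-1 / T))
    (hW : W = ∑' p : U.domain, ((p : List Bool).length : ℝ) * b ^ (p : List Bool).length)
    (hZ : Z = ∑' p : U.domain, b ^ (p : List Bool).length) (hE : E = W / Z) :
    0 < Z ∧ 0 ≤ E ∧ Nonempty (Data U b W E) := by
  classical
  obtain ⟨u, C, hu, hC, hub⟩ := exists_approx T hT0 hT1 hTc
  rw [← hb] at hub
  obtain ⟨Sl, B, hSl, hB, hnd, hin, hmono, hexh⟩ := enum_exists U.f U.partrec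
  have hb0 : 0 < b := by rw [hb]; positivity
  have hb1 : b < 1 / 2 := by
    rw [hb]
    have : (1 / 2 : ℝ) = 2 ^ (-1 : ℝ) := by rw [Real.rpow_neg_one]; norm_num
    rw [this]
    apply Real.rpow_lt_rpow_of_exponent_lt (by norm_num)
    rw [div_lt_iff₀ hT0]; linarith
  let S : ℕ → Finset U.domain := fun k => (Sl k).toFinset.subtype (· ∈ U.domain)
  have hSmem : ∀ k p, p ∈ S k ↔ (p : List Bool) ∈ Sl k := by
    intro k p; simp [S]
  have hsum : ∀ k (φ : List Bool → ℝ), ∑ p ∈ S k, φ p = ((Sl k).map φ).sum := by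
    intro k φ
    exact (Finset.sum_subtype_of_mem (p := (· ∈ U.domain)) φ
      (fun x hx => (hin k x (List.mem_toFinset.1 hx)).1)).trans (List.sum_toFinset φ (hnd k))
  have hSmono : Monotone S := by
    intro j k hjk p hp
    rw [hSmem] at hp ⊢
    exact hmono j k hjk hp
  have hSex : ∀ p, ∃ k, p ∈ S k := by
    intro p
    obtain ⟨k, hk⟩ := hexh p p.2
    exact ⟨k, (hSmem k p).2 hk⟩
  obtain ⟨hZ0, hE0, k0, K, hK, hmain⟩ := main_analysis (ι := U.domain)
    (fun p => (p : List Bool).length) (prefix_kraft U.domain U.prefixFree) b hb0 hb1 S hSmono hSex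
    u C hub W Z E hW hZ hE
  let num : ℕ → ℕ := fun k => ((Sl k).map fun p =>
    p.length * (u k ^ p.length * (2 ^ k) ^ (k - p.length))).sum
  let den : ℕ → ℕ := fun k => ((Sl k).map fun p =>
    ((u k + C) ^ p.length * (2 ^ k) ^ (k - p.length))).sum
  let om : ℕ → ℕ := fun k => ((Sl k).map fun p => 2 ^ (k - p.length)).sum
  have gen : ∀ (k : ℕ) (x y : ℕ → ℕ) (v : ℕ), 0 < v → 
      ((((Sl k).map fun p => x p.length * (y k ^ p.length * v ^ (k - p.length))).sum : ℕ) : ℝ)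
        = (v : ℝ) ^ k * ∑ p ∈ S k, (x (p : List Bool).length : ℝ) * ((y k : ℝ) / v) ^ (p : List Bool).length := by
    intro k x y v hv
    rw [hsum k (fun p => (x p.length : ℝ) * ((y k : ℝ) / v) ^ p.length), Nat.cast_list_sum,
      List.map_map, ← List.sum_map_mul_left]
    congr 1
    apply List.map_congr_left
    intro p hp
    have hl := (hin k p hp).2.1
    have hv' : (v : ℝ) ≠ 0 := by positivity
    have e : (v : ℝ) ^ k = v ^ (k - p.length) * v ^ p.length := by
      rw [← pow_add]; congr 1; omega
    simp only [Function.comp_apply]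
    push_cast
    rw [e, div_pow]
    field_simp
  have hn : ∀ k, (num k : ℝ) = (2 ^ k : ℝ) ^ k * 
      ∑ p ∈ S k, ((p : List Bool).length : ℝ) * ((u k : ℝ) / 2 ^ k) ^ (p : List Bool).length := by
    intro k
    have := gen k id u (2 ^ k) (by positivity)
    simpa [num] using this
  have hd : ∀ k, (den k : ℝ) = (2 ^ k : ℝ) ^ k * 
      ∑ p ∈ S k, (((u k + C : ℕ) : ℝ) / 2 ^ k) ^ (p : List Bool).length := by
    intro k
    have := gen k (fun _ => 1) (fun k => u k + C) (2 ^ k) (by positivity)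
    simpa [den] using this
  have ho : ∀ k, (om k : ℝ) = 2 ^ k * 
      ∑ p ∈ S k, (1 / 2 : ℝ) ^ (p : List Bool).length := by
    intro k
    have := gen k (fun _ => 1) (fun k => 1) 2 (by positivity)
    simpa [om] using this
  have hq : ∀ k, (num k : ℝ) / den k = 
      (∑ p ∈ S k, ((p : List Bool).length : ℝ) * ((u k : ℝ) / 2 ^ k) ^ (p : List Bool).length) /
      ∑ p ∈ S k, (((u k + C : ℕ) : ℝ) / 2 ^ k) ^ (p : List Bool).length := by
    intro k
    rw [hn, hd, mul_div_mul_left _ _ (by positivity)]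
  have hlen : Primrec (List.length : List Bool → ℕ) := Primrec.list_length
  have lenA : Primrec₂ fun (a : ℕ × ℕ) (p : List Bool) => p.length := hlen.comp Primrec.snd
  have kk : Primrec₂ fun (a : ℕ × ℕ) (p : List Bool) => a.1 := Primrec.fst.comp Primrec.fst
  have uu : Primrec₂ fun (a : ℕ × ℕ) (p : List Bool) => a.2 := Primrec.snd.comp Primrec.fst
  have tail : Primrec₂ fun (a : ℕ × ℕ) (p : List Bool) => (2 ^ a.1) ^ (a.1 - p.length) :=
    pow_primrec.comp₂ (pow_primrec.comp₂ (Primrec₂.const 2) kk) (Primrec.nat_sub.comp₂ kk lenA)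
  have pn : Primrec fun a : ℕ × ℕ => ((Sl a.1).map fun p =>
      p.length * (a.2 ^ p.length * (2 ^ a.1) ^ (a.1 - p.length))).sum :=
    list_sum_primrec (hSl.comp Primrec.fst)
      (Primrec.nat_mul.comp₂ lenA (Primrec.nat_mul.comp₂ (pow_primrec.comp₂ uu lenA) tail))
  have pd : Primrec fun a : ℕ × ℕ => ((Sl a.1).map fun p =>
      ((a.2 + C) ^ p.length * (2 ^ a.1) ^ (a.1 - p.length))).sum :=
    list_sum_primrec (hSl.comp Primrec.fst)
      (Primrec.nat_mul.comp₂ (pow_primrec.comp₂ (Primrec.nat_add.comp₂ uu (Primrec₂.const C)) lenA) tail)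
  have po : Primrec om :=
    list_sum_primrec hSl
      (pow_primrec.comp₂ (Primrec₂.const 2) (Primrec.nat_sub.comp₂ Primrec.fst (hlen.comp Primrec.snd)))
  refine ⟨hZ0, hE0, ⟨{
    num := num, den := den, om := om, B := B, S := S, k0 := k0, K := K,
    hnum := pn.to_comp.comp (Computable.pair Computable.id hu),
    hden := pd.to_comp.comp (Computable.pair Computable.id hu),
    hom := po.to_comp, hB := hB.to_comp, mono := hSmono, exh := hSex,
    bound := fun k p hp s hs => (hin k p ((hSmem k p).1 hp)).2.2 s hs,
    om_eq := fun k => by rw [ho]; field_simp,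
    K_pos := hK,
    den_pos := fun k hk => by
      have := (hmain k hk).1
      have h2 : (0 : ℝ) < den k := by rw [hd]; positivity
      exact_mod_cast h2,
    le_E := fun k hk => by rw [hq]; exact (hmain k hk).2.1,
    out := fun k hk p hp => by rw [hq]; exact (hmain k hk).2.2.1 p hp,
    err := fun k hk => by rw [hq]; exact (hmain k hk).2.2.2
    }⟩⟩

end EnergyAux

namespace EnergyAux

theorem H_le_length (U : Computer) (p s : List Bool) (h : s ∈ U.f p) : H U s ≤ p.length :=
  Nat.sInf_le ⟨p, rfl, h⟩

theorem H_le (U : Computer) (hU : IsOptimal U) (C : Computer) :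
    ∃ d : ℕ, ∀ p s, s ∈ C.f p → H U s ≤ p.length + d := by
  obtain ⟨d, hd⟩ := hU C
  refine ⟨d, fun p s hs => ?_⟩
  obtain ⟨q, hq, hs'⟩ := hd p (Part.dom_iff_mem.2 ⟨s, hs⟩)
  exact (H_le_length U q s (hs' s hs)).trans hq

/-- the computer with the empty program as its only program -/
noncomputable def constComputer (s : List Bool) : Computer where
  f := fun p => ((if p.length = 0 then some s else none : Option (List Bool)) : Part (List Bool))
  partrec := Computable.ofOption (Primrec.ite
    (Primrec.eq.comp Primrec.list_length (Primrec.const 0))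
    (Primrec.const (some s)) (Primrec.const none)).to_comp
  prefixFree := by
    intro p hp q hq _
    have key : ∀ p : List Bool, p ∈ {p : List Bool | (((if p.length = 0 then some s else none : Option (List Bool)) :
        Part (List Bool))).Dom} → p = [] := by
      intro p hp
      by_contra h
      exact h (by simpa using hp)
    rw [key p hp, key q hq]

theorem H_attained (U : Computer) (hU : IsOptimal U) (s : List Bool) :
    ∃ p, p.length = H U s ∧ s ∈ U.f p := by
  obtain ⟨d, hd⟩ := hU (constComputer s)
  obtain ⟨q, hq, hs'⟩ := hd [] (by simp [constComputer])
  have hne : {n | ∃ p : List Bool, p.length = n ∧ s ∈ U.f p}.Nonempty :=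
    ⟨_, q, rfl, hs' s (by simp [constComputer])⟩
  exact Nat.sInf_mem hne

theorem domain_nonempty (U : Computer) (hU : IsOptimal U) : Nonempty U.domain := by
  obtain ⟨p, _, hp⟩ := H_attained U hU []
  exact ⟨⟨p, Part.dom_iff_mem.2 ⟨_, hp⟩⟩⟩

def val (l : List Bool) : ℕ := l.foldl (fun a b => 2 * a + (if b = true then 1 else 0)) 0

theorem val_primrec : Primrec val := by
  refine Primrec.list_foldl (h := fun (_ : List Bool) (x : ℕ × Bool) =>
    2 * x.1 + (if x.2 = true then 1 else 0)) Primrec.id (Primrec.const 0) ?_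
  refine (Primrec.nat_add.comp (Primrec.nat_mul.comp (Primrec.const 2) (Primrec.fst.comp Primrec.snd))
    (Primrec.ite (Primrec.eq.comp (Primrec.snd.comp Primrec.snd) (Primrec.const true))
      (Primrec.const 1) (Primrec.const 0))).to₂

def toBits (n B : ℕ) : List Bool := (List.range n).map fun i => decide (B / 2 ^ (n - 1 - i) % 2 = 1)

theorem toBits_length (n B : ℕ) : (toBits n B).length = n := by simp [toBits]

theorem toBits_primrec : Primrec₂ toBits := by
  refine Primrec.list_map (Primrec.list_range.comp Primrec.fst) ?_
  have h1 : Primrec₂ fun (a : ℕ × ℕ) (i : ℕ) => a.1 - 1 - i :=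
    Primrec.nat_sub.comp (Primrec.nat_sub.comp (Primrec.fst.comp Primrec.fst) (Primrec.const 1)) Primrec.snd
  have h2 : Primrec₂ fun (a : ℕ × ℕ) (i : ℕ) => a.2 / 2 ^ (a.1 - 1 - i) % 2 :=
    Primrec.nat_mod.comp₂ (Primrec.nat_div.comp₂ (Primrec.snd.comp Primrec.fst)
      (pow_primrec.comp₂ (Primrec₂.const 2) h1)) (Primrec₂.const 2)
  exact (PrimrecPred.decide (Primrec.eq.comp h2 (Primrec.const 1))).to₂

theorem toBits_succ (n B : ℕ) : toBits (n + 1) B = toBits n (B / 2) ++ [decide (B % 2 = 1)] := by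
  unfold toBits
  rw [List.range_succ, List.map_append]
  congr 1
  · apply List.map_congr_left
    intro i hi
    rw [List.mem_range] at hi
    rw [Nat.div_div_eq_div_mul, ← pow_succ', show n + 1 - 1 - i = n - 1 - i + 1 by omega]
  · simp

theorem val_toBits (n B : ℕ) : val (toBits n B) = B % 2 ^ n := by
  induction n generalizing B with
  | zero => simp [toBits, val, Nat.mod_one]
  | succ n ih =>
    rw [toBits_succ]
    have h : val (toBits n (B / 2) ++ [decide (B % 2 = 1)]) =
      2 * val (toBits n (B / 2)) + (if decide (B % 2 = 1) = true then 1 else 0) := by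
      simp [val]
    rw [h, ih, pow_succ', Nat.mod_mul]
    rcases Nat.mod_two_eq_zero_or_one B with h | h <;> simp [h]; ring

theorem bits_eq (E : ℝ) (hE : 0 ≤ E) (n : ℕ) : bits E n = toBits n ⌊E * 2 ^ n⌋₊ := by
  unfold bits toBits
  apply List.map_congr_left
  intro i hi
  rw [List.mem_range] at hi
  unfold binDigit
  have e1 : ⌊E * 2 ^ n⌋₊ / 2 ^ (n - 1 - i) = ⌊E * 2 ^ (i + 1)⌋₊ := by
    rw [← Nat.floor_div_natCast]
    congr 1
    have : (2 : ℝ) ^ n = 2 ^ (i + 1) * 2 ^ (n - 1 - i) := by rw [← pow_add]; congr 1; omega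
    rw [this]; push_cast; field_simp
  have e2 : (⌊E * 2 ^ (i + 1)⌋₊ : ℤ) = ⌊E⌋ * 2 ^ (i + 1) + ⌊Int.fract E * 2 ^ (i + 1)⌋ := by
    rw [Int.natCast_floor_eq_floor (by positivity), ← Int.floor_intCast_add]
    congr 1
    push_cast
    rw [← add_mul, Int.floor_add_fract]
  rw [e1]
  congr 1
  have : (⌊E⌋ * 2 ^ (i + 1) : ℤ) = 2 * (⌊E⌋ * 2 ^ i) := by ring
  rw [this] at e2
  apply propext
  omega

theorem val_bits (E : ℝ) (hE : 0 ≤ E) (n : ℕ) :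
    ⌊E⌋₊ * 2 ^ n + val (bits E n) = ⌊E * 2 ^ n⌋₊ := by
  rw [bits_eq E hE, val_toBits]
  have : ⌊E⌋₊ = ⌊E * 2 ^ n⌋₊ / 2 ^ n := by
    rw [← Nat.floor_div_natCast]
    congr 1
    push_cast; field_simp
  rw [this]
  exact Nat.div_add_mod' _ _

theorem bits_length (E : ℝ) (n : ℕ) : (bits E n).length = n := by simp [bits]

end EnergyAux

namespace EnergyAux

theorem data_sum_tendsto {U : Computer} {b W E : ℝ} (D : Data U b W E)
    (hW : HasSum (fun p : U.domain => ((p : List Bool).length : ℝ) * b ^ (p : List Bool).length) W) :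
    Tendsto (fun k => D.K * (1 / 2 ^ k + (W - ∑ p ∈ D.S k,
      ((p : List Bool).length : ℝ) * b ^ (p : List Bool).length))) atTop (nhds 0) := by
  have h1 := hW.comp (tendsto_atTop_finset_of_monotone D.mono D.exh)
  have h2 : Tendsto (fun k : ℕ => (1 : ℝ) / 2 ^ k) atTop (nhds 0) := by
    have := tendsto_pow_atTop_nhds_zero_of_lt_one (r := (1 / 2 : ℝ)) (by norm_num) (by norm_num)
    refine this.congr fun k => ?_
    rw [div_pow, one_pow]
  have h3 := (h2.add (h1.const_sub W)).const_mul D.K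
  simpa using h3

theorem data_tendsto {U : Computer} {b W E : ℝ} (D : Data U b W E)
    (hW : HasSum (fun p : U.domain => ((p : List Bool).length : ℝ) * b ^ (p : List Bool).length) W) :
    Tendsto (fun k => (D.num k : ℝ) / D.den k) atTop (nhds E) := by
  have h := (data_sum_tendsto D hW).const_sub E
  rw [sub_zero] at h
  refine tendsto_of_tendsto_of_tendsto_of_le_of_le' h tendsto_const_nhds ?_ ?_
  · filter_upwards [eventually_ge_atTop D.k0] with k hk
    have := D.err k hk
    linarith
  · filter_upwards [eventually_ge_atTop D.k0] with k hk
    exact D.le_E k hk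

theorem left_computable {U : Computer} {b W E : ℝ} (D : Data U b W E)
    (hW : HasSum (fun p : U.domain => ((p : List Bool).length : ℝ) * b ^ (p : List Bool).length) W) :
    LeftComputable E := by
  have hs : Computable fun k : ℕ => k + D.k0 :=
    (Primrec.nat_add.comp Primrec.id (Primrec.const D.k0)).to_comp
  have e : ∀ k, (((-((D.num (k + D.k0) : ℚ) / (((D.den (k + D.k0) - 1 : ℕ) : ℚ) + 1)) : ℚ)) : ℝ) =
      -((D.num (k + D.k0) : ℝ) / D.den (k + D.k0)) := by
    intro k
    have h := D.den_pos (k + D.k0) (by omega)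
    have h2 : (((D.den (k + D.k0) - 1 : ℕ) : ℚ) + 1) = D.den (k + D.k0) := by
      exact_mod_cast Nat.sub_add_cancel h
    rw [h2]; push_cast; rfl
  refine ⟨fun k => -((D.num (k + D.k0) : ℚ) / (((D.den (k + D.k0) - 1 : ℕ) : ℚ) + 1)), ?_, ?_, ?_⟩
  · have h1 : Computable fun k => D.num (k + D.k0) := D.hnum.comp hs
    have h2 : Computable fun k => D.den (k + D.k0) - 1 :=
      (Primrec.nat_sub.comp Primrec.id (Primrec.const 1)).to_comp.comp (D.hden.comp hs)
    have h3 : Computable fun k => (D.num (k + D.k0), D.den (k + D.k0) - 1) := Computable.pair h1 h2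
    exact Computable.comp (g := fun k => (D.num (k + D.k0), D.den (k + D.k0) - 1)) negdiv_computable h3
  · intro k
    rw [e]
    have := D.le_E (k + D.k0) (by omega)
    linarith
  · simp only [e]
    exact (((tendsto_add_atTop_iff_nat D.k0).2 (data_tendsto D hW)).neg)

theorem random_growth (T : ℝ) (hT0 : 0 < T) (b : ℝ) (hb : b = (2 : ℝ) ^ (-1 / T)) (h : ℕ → ℕ)
    (K : ℝ) (hK : 0 < K) (d : ℕ)
    (hl : ∀ n, ∃ l : ℕ, 1 ≤ l ∧ l ≤ h n + d ∧ (l : ℝ) * b ^ l ≤ K * (1 / 2) ^ n) :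
    Tendsto (fun n : ℕ => (h n : ℝ) - T * n) atTop atTop := by
  have hb0 : 0 < b := by rw [hb]; positivity
  have hb1 : b ≤ 1 := by
    rw [hb]
    apply Real.rpow_le_one_of_one_le_of_nonpos (by norm_num)
    rw [div_nonpos_iff]; right; constructor <;> linarith
  rw [tendsto_atTop]
  intro M
  set c : ℝ := M + d
  set L : ℕ := ⌈K * 2 ^ (c / T)⌉₊
  have h2 : Tendsto (fun n : ℕ => K * (1 / 2 : ℝ) ^ n) atTop (nhds 0) := by
    simpa using (tendsto_pow_atTop_nhds_zero_of_lt_one (r := (1 / 2 : ℝ)) (by norm_num)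
      (by norm_num)).const_mul K
  filter_upwards [h2.eventually (gt_mem_nhds (show (0 : ℝ) < b ^ L by positivity))] with n hn
  by_contra hcon
  push Not at hcon
  obtain ⟨l, hl1, hl2, hl3⟩ := hl n
  have hl2' : (l : ℝ) ≤ h n + d := by exact_mod_cast hl2
  have hlc : (l : ℝ) < T * n + c := by simp only [c]; linarith
  have hbl : (1 / 2 : ℝ) ^ n * 2 ^ (-(c / T)) ≤ b ^ l := by
    have e1 : (1 / 2 : ℝ) ^ n = 2 ^ (-(n : ℝ)) := by
      rw [Real.rpow_neg (by norm_num), Real.rpow_natCast, div_pow, one_pow, one_div]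
    rw [e1, ← Real.rpow_add (by norm_num), hb, ← Real.rpow_natCast, ← Real.rpow_mul (by norm_num)]
    apply Real.rpow_le_rpow_of_exponent_le (by norm_num)
    rw [div_mul_eq_mul_div, le_div_iff₀ hT0, add_mul, neg_mul, neg_mul, div_mul_cancel₀ _ hT0.ne']
    linarith
  have hlL : (l : ℝ) ≤ K * 2 ^ (c / T) := by
    have h3 : (l : ℝ) * ((1 / 2 : ℝ) ^ n * 2 ^ (-(c / T))) ≤ K * (1 / 2) ^ n :=
      le_trans (by gcongr) hl3
    rw [Real.rpow_neg (by norm_num)] at h3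
    have hp : (0 : ℝ) < 2 ^ (c / T) := by positivity
    have hq : (0 : ℝ) < (1 / 2 : ℝ) ^ n := by positivity
    have h4 : (l : ℝ) * ((1 / 2 : ℝ) ^ n * (2 ^ (c / T))⁻¹) = (l / 2 ^ (c / T)) * (1 / 2) ^ n := by
      field_simp
    rw [h4] at h3
    have h5 := le_of_mul_le_mul_right h3 hq
    rwa [div_le_iff₀ hp] at h5
  have hlL' : l ≤ L := by
    have : (l : ℝ) ≤ L := hlL.trans (Nat.le_ceil _)
    exact_mod_cast this
  have h6 : b ^ L ≤ b ^ l := pow_le_pow_of_le_one hb0.le hb1 hlL'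
  have h7 : b ^ l ≤ l * b ^ l := by
    have : (1 : ℝ) ≤ l := by exact_mod_cast hl1
    nlinarith [pow_pos hb0 l]
  linarith

theorem search_partrec {α : Type*} [Primcodable α] {p : α → ℕ → Bool} {g : α → ℕ → List Bool}
    (hp : Computable₂ p) (hg : Computable₂ g) :
    Partrec fun a => (Nat.rfind fun k => Part.some (p a k)).map (g a) :=
  (Partrec.rfind hp.partrec₂).map hg

theorem chaitin_random (U : Computer) (hU : IsOptimal U) (T : ℝ) (hT0 : 0 < T)
    (b W E : ℝ) (hb : b = (2 : ℝ) ^ (-1 / T)) (hE : 0 ≤ E) (D : Data U b W E)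
    (hW : HasSum (fun p : U.domain => ((p : List Bool).length : ℝ) * b ^ (p : List Bool).length) W) :
    ChaitinRandom U T E := by
  let p : List Bool → ℕ → Bool := fun x k => decide (D.k0 ≤ k ∧
    (⌊E⌋₊ * 2 ^ x.length + val x) * D.den k < D.num k * 2 ^ x.length + D.den k)
  have hp : Computable₂ p := by
    have h : Primrec fun a : (List Bool × ℕ) × (ℕ × ℕ) => decide (D.k0 ≤ a.1.2 ∧
        (⌊E⌋₊ * 2 ^ a.1.1.length + val a.1.1) * a.2.2 < a.2.1 * 2 ^ a.1.1.length + a.2.2) := by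
      have hx : Primrec fun a : (List Bool × ℕ) × (ℕ × ℕ) => a.1.1 := Primrec.fst.comp Primrec.fst
      have hk : Primrec fun a : (List Bool × ℕ) × (ℕ × ℕ) => a.1.2 := Primrec.snd.comp Primrec.fst
      have h1 : Primrec fun a : (List Bool × ℕ) × (ℕ × ℕ) => a.2.1 := Primrec.fst.comp Primrec.snd
      have h2 : Primrec fun a : (List Bool × ℕ) × (ℕ × ℕ) => a.2.2 := Primrec.snd.comp Primrec.snd
      have ht : Primrec fun a : (List Bool × ℕ) × (ℕ × ℕ) => 2 ^ a.1.1.length :=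
        pow_primrec.comp (Primrec.const 2) (Primrec.list_length.comp hx)
      exact ((Primrec.nat_le.comp (Primrec.const _) hk).and (Primrec.nat_lt.comp
        (Primrec.nat_mul.comp (Primrec.nat_add.comp (Primrec.nat_mul.comp (Primrec.const _) ht)
          (val_primrec.comp hx)) h2)
        (Primrec.nat_add.comp (Primrec.nat_mul.comp h1 ht) h2))).decide
    exact h.to_comp.comp (Computable.pair Computable.id
      (Computable.pair (D.hnum.comp Computable.snd) (D.hden.comp Computable.snd)))
  let g : List Bool → ℕ → List Bool := fun _ k => (List.range (D.B k)).map (fun _ => true)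
  have hg : Computable₂ g :=
    (Primrec.list_map Primrec.list_range (Primrec₂.const true)).to_comp.comp (D.hB.comp Computable.snd)
  let C : Computer := {
    f := fun q => (U.f q).bind fun x => (Nat.rfind fun k => Part.some (p x k)).map (g x)
    partrec := U.partrec.bind ((search_partrec hp hg).comp Computable.snd).to₂
    prefixFree := fun x hx y hy h => U.prefixFree x hx.1 y hy.1 h }
  obtain ⟨d, hd⟩ := H_le U hU C
  refine random_growth T hT0 b hb (fun n => H U (bits E n)) (D.K * 2) (by have := D.K_pos; linarith) d ?_
  intro n
  have hB := val_bits E hE n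
  set A := ⌊E * 2 ^ n⌋₊ with hA
  have hA1 : (A : ℝ) ≤ E * 2 ^ n := Nat.floor_le (by positivity)
  have hA2 : E * 2 ^ n < A + 1 := Nat.lt_floor_add_one _
  have hpk : ∀ k, p (bits E n) k = true ↔ D.k0 ≤ k ∧ A * D.den k < D.num k * 2 ^ n + D.den k := by
    intro k
    simp only [p, decide_eq_true_eq, bits_length, hB]
  have hex : ∃ k, p (bits E n) k = true := by
    have h1 := (data_tendsto D hW).eventually (lt_mem_nhds (show E - (1 / 2) ^ n < E by
      have : (0 : ℝ) < (1 / 2) ^ n := by positivity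
      linarith))
    obtain ⟨k, hk1, hk2⟩ := (h1.and (eventually_ge_atTop D.k0)).exists
    refine ⟨k, (hpk k).2 ⟨hk2, ?_⟩⟩
    have hd0 : (0 : ℝ) < D.den k := by exact_mod_cast D.den_pos k hk2
    rw [lt_div_iff₀ hd0] at hk1
    have h2 : (A : ℝ) * D.den k < D.num k * 2 ^ n + D.den k := by
      have e : (1 / 2 : ℝ) ^ n * 2 ^ n = 1 := by rw [← mul_pow]; norm_num
      have h3 : (E - (1 / 2) ^ n) * D.den k * 2 ^ n < D.num k * 2 ^ n := by gcongr
      have h4 : (E - (1 / 2) ^ n) * D.den k * 2 ^ n = (E * 2 ^ n - (1 / 2) ^ n * 2 ^ n) * D.den k := by ring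
      rw [h4, e] at h3
      nlinarith
    exact_mod_cast h2
  obtain ⟨k1, hk1⟩ := hex
  obtain ⟨k, hk, _⟩ := Nat.rfind_min' (p := p (bits E n)) hk1
  have hspec := Nat.rfind_spec hk
  have hpt : p (bits E n) k = true := by simpa using hspec
  obtain ⟨hkk, hlt⟩ := (hpk k).1 hpt
  have hd0 : (0 : ℝ) < D.den k := by exact_mod_cast D.den_pos k hkk
  have herr : E - (D.num k : ℝ) / D.den k ≤ 2 * (1 / 2) ^ n := by
    have h2 : (A : ℝ) * D.den k < D.num k * 2 ^ n + D.den k := by exact_mod_cast hlt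
    have h3 : (A : ℝ) < D.num k / D.den k * 2 ^ n + 1 := by
      have : (D.num k : ℝ) / D.den k * 2 ^ n + 1 = (D.num k * 2 ^ n + D.den k) / D.den k := by
        field_simp
      rw [this, lt_div_iff₀ hd0]; exact h2
    have e : (1 / 2 : ℝ) ^ n = 1 / 2 ^ n := by rw [div_pow, one_pow]
    have hpow : (0 : ℝ) < 2 ^ n := by positivity
    rw [e, mul_one_div, le_div_iff₀ hpow]
    nlinarith
  set s := g (bits E n) k with hs
  have hsl : s.length = D.B k := by simp [hs, g]
  obtain ⟨q, hq1, hq2⟩ := H_attained U hU (bits E n)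
  have hCq : s ∈ C.f q := by
    refine Part.mem_bind hq2 ?_
    exact Part.mem_map _ hk
  have hHs := hd q s hCq
  obtain ⟨r, hr1, hr2⟩ := H_attained U hU s
  let r' : U.domain := ⟨r, Part.dom_iff_mem.2 ⟨s, hr2⟩⟩
  have hr' : r' ∉ D.S k := by
    intro hmem
    have := D.bound k r' hmem s hr2
    omega
  obtain ⟨ho1, ho2⟩ := D.out k hkk r' hr'
  refine ⟨r.length, ho1, by omega, ho2.trans ?_⟩
  have := mul_le_mul_of_nonneg_left herr D.K_pos.le
  linarith

end EnergyAux

namespace EnergyAux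

theorem comp_nd {F : List Bool → ℕ → ℕ → ℕ → List Bool}
    (hF : Primrec fun a : (List Bool × ℕ) × (ℕ × ℕ) => F a.1.1 a.1.2 a.2.1 a.2.2)
    {u v : ℕ → ℕ} (hu : Computable u) (hv : Computable v) :
    Computable₂ fun p k => F p k (u k) (v k) :=
  hF.to_comp.comp (Computable.pair Computable.id
    (Computable.pair (hu.comp Computable.snd) (hv.comp Computable.snd)))

section decoder
variable {U : Computer} {b W E : ℝ} (D : Data U b W E) (N P s e : ℕ)

def decCond (p : List Bool) (k : ℕ) : Bool :=
  decide (p.length = p.idxOf false + 1 + P * (p.idxOf false + 1) ∧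
    D.k0 + (N * p.idxOf false + s) ≤ k ∧
    val (p.drop (p.idxOf false + 1)) * 2 ^ k < D.om k * 2 ^ (P * (p.idxOf false + 1)))

def decOut (p : List Bool) (k : ℕ) : List Bool :=
  toBits (N * p.idxOf false + s) (D.num k * 2 ^ (N * p.idxOf false + s) / D.den k + e)

theorem idx_primrec : Primrec fun p : List Bool => p.idxOf false :=
  Primrec.list_idxOf.comp (Primrec.const false) Primrec.id

theorem decCond_computable : Computable₂ (decCond D N P s) := by
  have h : Primrec fun a : (List Bool × ℕ) × ℕ =>
      decide (a.1.1.length = a.1.1.idxOf false + 1 + P * (a.1.1.idxOf false + 1) ∧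
      D.k0 + (N * a.1.1.idxOf false + s) ≤ a.1.2 ∧
      val (a.1.1.drop (a.1.1.idxOf false + 1)) * 2 ^ a.1.2 < a.2 * 2 ^ (P * (a.1.1.idxOf false + 1))) := by
    have hx : Primrec fun a : (List Bool × ℕ) × ℕ => a.1.1 := Primrec.fst.comp Primrec.fst
    have hk : Primrec fun a : (List Bool × ℕ) × ℕ => a.1.2 := Primrec.snd.comp Primrec.fst
    have h2 : Primrec fun a : (List Bool × ℕ) × ℕ => a.2 := Primrec.snd
    have hr : Primrec fun a : (List Bool × ℕ) × ℕ => a.1.1.idxOf false := idx_primrec.comp hx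
    have hr1 : Primrec fun a : (List Bool × ℕ) × ℕ => a.1.1.idxOf false + 1 := Primrec.succ.comp hr
    have hm : Primrec fun a : (List Bool × ℕ) × ℕ => P * (a.1.1.idxOf false + 1) :=
      Primrec.nat_mul.comp (Primrec.const P) hr1
    have hc1 : PrimrecPred fun a : (List Bool × ℕ) × ℕ =>
        a.1.1.length = a.1.1.idxOf false + 1 + P * (a.1.1.idxOf false + 1) :=
      Primrec.eq.comp (Primrec.list_length.comp hx) (Primrec.nat_add.comp hr1 hm)
    have hc2 : PrimrecPred fun a : (List Bool × ℕ) × ℕ =>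
        D.k0 + (N * a.1.1.idxOf false + s) ≤ a.1.2 :=
      Primrec.nat_le.comp (Primrec.nat_add.comp (Primrec.const _)
        (Primrec.nat_add.comp (Primrec.nat_mul.comp (Primrec.const N) hr) (Primrec.const s))) hk
    have hc3 : PrimrecPred fun a : (List Bool × ℕ) × ℕ =>
        val (a.1.1.drop (a.1.1.idxOf false + 1)) * 2 ^ a.1.2 < a.2 * 2 ^ (P * (a.1.1.idxOf false + 1)) :=
      Primrec.nat_lt.comp (Primrec.nat_mul.comp (val_primrec.comp (Primrec.list_drop.comp hr1 hx))
        (pow_primrec.comp (Primrec.const 2) hk))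
        (Primrec.nat_mul.comp h2 (pow_primrec.comp (Primrec.const 2) hm))
    exact (hc1.and (hc2.and hc3)).decide
  exact h.to_comp.comp (Computable.pair Computable.id (D.hom.comp Computable.snd))

theorem decOut_computable : Computable₂ (decOut D N s e) := by
  have h : Primrec fun a : (List Bool × ℕ) × (ℕ × ℕ) =>
      toBits (N * a.1.1.idxOf false + s) (a.2.1 * 2 ^ (N * a.1.1.idxOf false + s) / a.2.2 + e) := by
    have hx : Primrec fun a : (List Bool × ℕ) × (ℕ × ℕ) => a.1.1 := Primrec.fst.comp Primrec.fst
    have hr : Primrec fun a : (List Bool × ℕ) × (ℕ × ℕ) => a.1.1.idxOf false := idx_primrec.comp hx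
    have hn : Primrec fun a : (List Bool × ℕ) × (ℕ × ℕ) => N * a.1.1.idxOf false + s :=
      Primrec.nat_add.comp (Primrec.nat_mul.comp (Primrec.const N) hr) (Primrec.const s)
    have hd : Primrec fun a : (List Bool × ℕ) × (ℕ × ℕ) =>
        a.2.1 * 2 ^ (N * a.1.1.idxOf false + s) / a.2.2 :=
      Primrec.nat_div.comp
        (Primrec.nat_mul.comp (Primrec.fst.comp Primrec.snd) (pow_primrec.comp (Primrec.const 2) hn))
        (Primrec.snd.comp Primrec.snd)
    have he : Primrec fun a : (List Bool × ℕ) × (ℕ × ℕ) =>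
        a.2.1 * 2 ^ (N * a.1.1.idxOf false + s) / a.2.2 + e :=
      Primrec.nat_add.comp hd (Primrec.const e)
    exact toBits_primrec.comp hn he
  exact comp_nd (F := fun p _ x y => toBits (N * p.idxOf false + s)
    (x * 2 ^ (N * p.idxOf false + s) / y + e)) h D.hnum D.hden

theorem decCond_length (p : List Bool)
    (h : ((Nat.rfind fun k => Part.some (decCond D N P s p k)).map (decOut D N s e p)).Dom) :
    p.length = p.idxOf false + 1 + P * (p.idxOf false + 1) := by
  have h' : (Nat.rfind fun k => Part.some (decCond D N P s p k)).Dom := h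
  obtain ⟨k, hk⟩ := Part.dom_iff_mem.1 h'
  have h2 := Nat.rfind_spec hk
  have h3 : decCond D N P s p k = true := by simpa using h2
  simp only [decCond, decide_eq_true_eq] at h3
  exact h3.1

def decComputer : Computer where
  f := fun p => (Nat.rfind fun k => Part.some (decCond D N P s p k)).map (decOut D N s e p)
  partrec := search_partrec (decCond_computable D N P s) (decOut_computable D N s e)
  prefixFree := by
    intro p hp q hq hpq
    have h1 := decCond_length D N P s e p hp
    have h2 := decCond_length D N P s e q hq
    obtain ⟨t, rfl⟩ := hpq
    have hmem : false ∈ p := by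
      rw [← List.idxOf_lt_length_iff]; omega
    rw [List.idxOf_append_of_mem hmem, ← h1] at h2
    exact List.IsPrefix.eq_of_length (List.prefix_append p t) h2.symm

end decoder

theorem idxOf_prog (r : ℕ) (σ : List Bool) : (List.replicate r true ++ false :: σ).idxOf false = r := by
  rw [List.idxOf_append_of_notMem (by simp [List.mem_replicate])]
  simp

theorem drop_prog (r : ℕ) (σ : List Bool) : (List.replicate r true ++ false :: σ).drop (r + 1) = σ := by
  rw [List.drop_append]
  simp

theorem compress_bound (U : Computer) (hU : IsOptimal U) (b W E : ℝ) (hb0 : 0 < b)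
    (hE : 0 ≤ E) (D : Data U b W E)
    (hWt : W = ∑' p : U.domain, ((p : List Bool).length : ℝ) * b ^ (p : List Bool).length)
    (N P : ℕ) (hN : 0 < N) (β : ℝ) (hbβ : b < β) (hβ : β ≤ 1 / 2) (hβP : β ^ P = (1 / 2) ^ N) :
    ∃ c : ℕ, ∀ n, H U (bits E n) ≤ (P + 1) * (n / N + 1) + c := by
  have hKr := prefix_kraft U.domain U.prefixFree
  obtain ⟨K1, hK1, htail⟩ := tail_bound (ι := U.domain) (fun p => (p : List Bool).length)
    hKr b β hb0 hbβ hβ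
  have hsO : Summable fun p : U.domain => (1 / 2 : ℝ) ^ (p : List Bool).length := kraft_summable _ hKr
  set Ω : ℝ := ∑' p : U.domain, (1 / 2 : ℝ) ^ (p : List Bool).length with hΩ
  have hΩ1 : Ω ≤ 1 := hsO.tsum_le_of_sum_le hKr
  have hΩ0 : 0 < Ω := by
    obtain ⟨p⟩ := domain_nonempty U hU
    exact hsO.tsum_pos (fun p => by positivity) p (by positivity)
  have hom : Tendsto (fun k => (D.om k : ℝ) / 2 ^ k) atTop (nhds Ω) := by
    simp only [D.om_eq]
    exact hsO.hasSum.comp (tendsto_atTop_finset_of_monotone D.mono D.exh)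
  have hK0 := D.K_pos
  set M : ℕ := ⌈D.K * (1 + K1) + 1⌉₊ with hM
  choose d hd using fun s e => H_le U hU (decComputer D N P s e)
  refine ⟨(Finset.range N ×ˢ Finset.range (M + 1)).sup (fun x => d x.1 x.2), fun n => ?_⟩
  set r := n / N with hr
  set s := n % N with hs
  have hn : N * r + s = n := Nat.div_add_mod n N
  have hsN : s < N := Nat.mod_lt _ hN
  set m := P * (r + 1) with hm
  have h2m : (0 : ℝ) < 2 ^ m := by positivity
  -- the approximation of Omega
  obtain ⟨A, hA1, hA2, hA3⟩ : ∃ A : ℕ, A < 2 ^ m ∧ (A : ℝ) < 2 ^ m * Ω ∧ 2 ^ m * Ω ≤ A + 1 := by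
    have hpos : 0 < 2 ^ m * Ω := by positivity
    have hc : 0 < ⌈2 ^ m * Ω⌉₊ := Nat.ceil_pos.2 hpos
    obtain ⟨A, hA⟩ := Nat.exists_eq_succ_of_ne_zero hc.ne'
    have h1 : 2 ^ m * Ω ≤ (⌈2 ^ m * Ω⌉₊ : ℝ) := Nat.le_ceil _
    have h2 : (⌈2 ^ m * Ω⌉₊ : ℝ) < 2 ^ m * Ω + 1 := Nat.ceil_lt_add_one hpos.le
    rw [hA] at h1 h2
    push_cast at h1 h2
    refine ⟨A, ?_, by linarith, h1⟩
    have : (A : ℝ) < 2 ^ m := by nlinarith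
    exact_mod_cast this
  set σ := toBits m A with hσ
  have hσv : val σ = A := by rw [hσ, val_toBits, Nat.mod_eq_of_lt hA1]
  set p := List.replicate r true ++ false :: σ with hp
  have hpi : p.idxOf false = r := idxOf_prog r σ
  have hpd : p.drop (r + 1) = σ := drop_prog r σ
  have hpl : p.length = r + 1 + m := by simp [hp, hσ, toBits_length]; omega
  have hcond : ∀ k, decCond D N P s p k = true ↔ D.k0 + n ≤ k ∧ A * 2 ^ k < D.om k * 2 ^ m := by
    intro k
    simp only [decCond, decide_eq_true_eq, hpi, hpd, hσv, hn, hpl, ← hm, true_and]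
  have hex : ∃ k, decCond D N P s p k = true := by
    have h1 := hom.eventually (lt_mem_nhds (show (A : ℝ) / 2 ^ m < Ω by
      rw [div_lt_iff₀ h2m]; linarith))
    obtain ⟨k, hk1, hk2⟩ := (h1.and (eventually_ge_atTop (D.k0 + n))).exists
    refine ⟨k, (hcond k).2 ⟨hk2, ?_⟩⟩
    rw [div_lt_div_iff₀ h2m (by positivity)] at hk1
    exact_mod_cast hk1
  obtain ⟨k1, hk1⟩ := hex
  obtain ⟨k, hk, _⟩ := Nat.rfind_min' (p := decCond D N P s p) hk1
  have hspec := Nat.rfind_spec hk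
  have hpt : decCond D N P s p k = true := by simpa using hspec
  obtain ⟨hkk, hlt⟩ := (hcond k).1 hpt
  have hkk0 : D.k0 ≤ k := by omega
  have hd0 : (0 : ℝ) < D.den k := by exact_mod_cast D.den_pos k hkk0
  have htl : Ω - ∑ q ∈ D.S k, (1 / 2 : ℝ) ^ (q : List Bool).length ≤ (1 / 2) ^ m := by
    rw [← D.om_eq]
    have h1 : (A : ℝ) / 2 ^ m < D.om k / 2 ^ k := by
      rw [div_lt_div_iff₀ h2m (by positivity)]
      exact_mod_cast hlt
    have h2 : Ω ≤ (A + 1) / 2 ^ m := by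
      rw [le_div_iff₀ h2m]; linarith
    rw [add_div] at h2
    rw [div_pow, one_pow]
    linarith
  have hWk := htail (D.S k) m htl
  rw [← hWt] at hWk
  have hβm : β ^ m ≤ (1 / 2) ^ n := by
    rw [hm, pow_mul, hβP, ← pow_mul]
    apply pow_le_pow_of_le_one (by norm_num) (by norm_num)
    rw [Nat.mul_add]; omega
  have hkn : (1 : ℝ) / 2 ^ k ≤ (1 / 2) ^ n := by
    rw [← one_div_pow]
    exact pow_le_pow_of_le_one (by norm_num) (by norm_num) (by omega)
  have herr : E - (D.num k : ℝ) / D.den k ≤ D.K * (1 + K1) * (1 / 2) ^ n := by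
    refine (D.err k hkk0).trans ?_
    rw [mul_assoc]
    apply mul_le_mul_of_nonneg_left _ hK0.le
    have := mul_le_mul_of_nonneg_left hβm hK1.le
    rw [add_mul, one_mul]
    linarith
  have hle := D.le_E k hkk0
  set A' := ⌊E * 2 ^ n⌋₊ with hA'
  set G := D.num k * 2 ^ n / D.den k with hG
  have hGf : G = ⌊(D.num k : ℝ) / D.den k * 2 ^ n⌋₊ := by
    rw [hG, ← Nat.floor_div_eq_div (K := ℝ)]
    congr 1
    push_cast; ring
  have hGA : G ≤ A' := by
    rw [hGf]
    apply Nat.floor_le_floor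
    gcongr
  have heM : A' - G ≤ M := by
    have h1 : (A' : ℝ) ≤ E * 2 ^ n := Nat.floor_le (by positivity)
    have h2 : (D.num k : ℝ) / D.den k * 2 ^ n < G + 1 := by rw [hGf]; exact Nat.lt_floor_add_one _
    have h3 : (E - (D.num k : ℝ) / D.den k) * 2 ^ n ≤ D.K * (1 + K1) := by
      have e : (1 / 2 : ℝ) ^ n * 2 ^ n = 1 := by rw [← mul_pow]; norm_num
      calc _ ≤ D.K * (1 + K1) * (1 / 2) ^ n * 2 ^ n := by gcongr
        _ = D.K * (1 + K1) := by rw [mul_assoc, e, mul_one]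
    have h4 : D.K * (1 + K1) + 1 ≤ (M : ℝ) := Nat.le_ceil _
    have h5 : (A' : ℝ) ≤ M + G := by nlinarith
    have h6 : A' ≤ M + G := by exact_mod_cast h5
    omega
  have hout : bits E n ∈ (decComputer D N P s (A' - G)).f p := by
    have h1 : decOut D N s (A' - G) p k = bits E n := by
      unfold decOut
      rw [hpi, hn, ← hG, Nat.add_sub_cancel' hGA, bits_eq E hE]
    rw [← h1]
    exact Part.mem_map _ hk
  have hfin := hd s (A' - G) p _ hout
  have hsup : d s (A' - G) ≤ (Finset.range N ×ˢ Finset.range (M + 1)).sup (fun x => d x.1 x.2) :=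
    Finset.le_sup (f := fun x : ℕ × ℕ => d x.1 x.2) (b := (s, A' - G)) (by
      simp only [Finset.mem_product, Finset.mem_range]
      exact ⟨hsN, by omega⟩)
  have hl2 : p.length = (P + 1) * (r + 1) := by rw [hpl, hm]; ring
  omega

theorem d_compressible (U : Computer) (hU : IsOptimal U) (T : ℝ) (hT0 : 0 < T) (hT1 : T < 1)
    (b W E : ℝ) (hb : b = (2 : ℝ) ^ (-1 / T)) (hE : 0 ≤ E) (D : Data U b W E)
    (hWt : W = ∑' p : U.domain, ((p : List Bool).length : ℝ) * b ^ (p : List Bool).length) :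
    DCompressible U T E := by
  have hb0 : 0 < b := by rw [hb]; positivity
  unfold DCompressible
  apply le_of_forall_pos_le_add
  intro ε hε
  obtain ⟨N, hN⟩ := exists_nat_gt (4 / ε)
  have hN0' : (0 : ℝ) < N := lt_trans (by positivity) hN
  have hN0 : 0 < N := by exact_mod_cast hN0'
  set P := ⌊T * N⌋₊ + 1 with hP
  have hP1 : T * N < P := by rw [hP]; push_cast; exact Nat.lt_floor_add_one _
  have hP2 : (P : ℝ) ≤ T * N + 1 := by
    rw [hP]; push_cast
    have := Nat.floor_le (show 0 ≤ T * N by positivity)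
    linarith
  have hP0 : (0 : ℝ) < P := lt_trans (by positivity) hP1
  have hPN : P ≤ N := by
    rw [hP]
    apply Nat.succ_le_of_lt
    rw [Nat.floor_lt (by positivity)]
    nlinarith
  have hPN' : (P : ℝ) ≤ N := by exact_mod_cast hPN
  set β : ℝ := 2 ^ (-(N : ℝ) / P) with hβdef
  have hbβ : b < β := by
    rw [hb, hβdef]
    apply Real.rpow_lt_rpow_of_exponent_lt (by norm_num)
    rw [div_lt_div_iff₀ hT0 hP0]
    linarith
  have hβ : β ≤ 1 / 2 := by
    have : (1 / 2 : ℝ) = 2 ^ (-1 : ℝ) := by rw [Real.rpow_neg_one]; norm_num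
    rw [this, hβdef]
    apply Real.rpow_le_rpow_of_exponent_le (by norm_num)
    rw [div_le_iff₀ hP0]; linarith
  have hβP : β ^ P = (1 / 2) ^ N := by
    rw [hβdef, ← Real.rpow_natCast, ← Real.rpow_mul (by norm_num), div_mul_cancel₀ _ hP0.ne',
      Real.rpow_neg (by norm_num), Real.rpow_natCast, div_pow, one_pow, one_div]
  obtain ⟨c, hc⟩ := compress_bound U hU b W E hb0 hE D hWt N P hN0 β hbβ hβ hβP
  refine limsup_le_of_le ?_ ?_
  · exact IsBoundedUnder.isCoboundedUnder_le ⟨0, by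
      rw [eventually_map]
      exact Eventually.of_forall fun n => by positivity⟩
  · obtain ⟨n0, hn0⟩ := exists_nat_gt (((P : ℝ) + 1 + c) / (ε / 2))
    filter_upwards [eventually_ge_atTop (n0 + 1)] with n hn
    have hnn : (0 : ℝ) < n := by
      have : 0 < n := by omega
      exact_mod_cast this
    have hn1 : (n0 : ℝ) ≤ n := by
      have : n0 ≤ n := by omega
      exact_mod_cast this
    have h1 : (H U (bits E n) : ℝ) ≤ (P + 1) * (((n / N : ℕ) : ℝ) + 1) + c := by exact_mod_cast hc n
    have h2 : ((n / N : ℕ) : ℝ) ≤ n / N := Nat.cast_div_le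
    rw [div_le_iff₀ hnn]
    have h3 : (P : ℝ) + 1 + c ≤ ε / 2 * n := by
      rw [div_lt_iff₀ (by positivity)] at hn0
      nlinarith
    have h4 : ((P : ℝ) + 1) * (n / N) ≤ (T + ε / 2) * n := by
      have h5 : (P : ℝ) + 1 ≤ (T + ε / 2) * N := by
        rw [div_lt_iff₀ hε] at hN
        nlinarith
      calc ((P : ℝ) + 1) * (n / N) ≤ (T + ε / 2) * N * (n / N) := by gcongr
        _ = (T + ε / 2) * n := by field_simp
    have h6 : ((P : ℝ) + 1) * ((n / N : ℕ) : ℝ) ≤ (P + 1) * (n / N) := by gcongr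
    nlinarith

end EnergyAux

/-- **Theorem (paper Thm 10(i)).** For computable `T` with `0 < T < 1`, `Z(T)`
and `W(1,T)` converge, `Z(T) > 0`, and the energy `E(T) = W(1,T)/Z(T)` is a
left-computable real which is Chaitin `T`-random and `T`-compressible. -/
theorem energy_random_compressible (U : Computer) (hU : IsOptimal U)
    (T : ℝ) (hT0 : 0 < T) (hT1 : T < 1) (hTc : ComputableReal T) :
    Summable (zterm U T) ∧
    Summable (wlterm U T) ∧
    0 < ∑' p, zterm U T p ∧
    LeftComputable ((∑' p, wlterm U T p) / (∑' p, zterm U T p)) ∧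
    ChaitinRandom U T ((∑' p, wlterm U T p) / (∑' p, zterm U T p)) ∧
    DCompressible U T ((∑' p, wlterm U T p) / (∑' p, zterm U T p)) := by
  set b : ℝ := (2 : ℝ) ^ (-1 / T) with hb
  have hb0 : 0 < b := by positivity
  have hb1 : b < 1 / 2 := by
    have : (1 / 2 : ℝ) = 2 ^ (-1 : ℝ) := by rw [Real.rpow_neg_one]; norm_num
    rw [this, hb]
    apply Real.rpow_lt_rpow_of_exponent_lt (by norm_num)
    rw [div_lt_iff₀ hT0]; linarith
  have hpw : ∀ l : ℕ, (2 : ℝ) ^ (-(l : ℝ) / T) = b ^ l := by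
    intro l
    rw [hb, ← Real.rpow_natCast, ← Real.rpow_mul (by norm_num)]
    congr 1
    ring
  have hz : zterm U T = fun p : U.domain => b ^ (p : List Bool).length := by
    funext p; exact hpw _
  have hw : wlterm U T = fun p : U.domain => ((p : List Bool).length : ℝ) * b ^ (p : List Bool).length := by
    funext p; unfold wlterm; rw [hpw]
  have hKr := EnergyAux.prefix_kraft U.domain U.prefixFree
  have sz : Summable fun p : U.domain => b ^ (p : List Bool).length := by
    simpa using EnergyAux.poly_summable (ι := U.domain) (fun p => (p : List Bool).length) hKr 0 b hb0.le hb1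
  have sw : Summable fun p : U.domain => ((p : List Bool).length : ℝ) * b ^ (p : List Bool).length := by
    simpa using EnergyAux.poly_summable (ι := U.domain) (fun p => (p : List Bool).length) hKr 1 b hb0.le hb1
  rw [hz, hw]
  obtain ⟨hZ, hE, ⟨D⟩⟩ := EnergyAux.data_exists U (EnergyAux.domain_nonempty U hU) T hT0 hT1 hTc b
    _ _ _ hb rfl rfl rfl
  exact ⟨sz, sw, hZ, EnergyAux.left_computable D sw.hasSum,
    EnergyAux.chaitin_random U hU T hT0 b _ _ hb hE D sw.hasSum,
    EnergyAux.d_compressible U hU T hT0 hT1 b _ _ hb hE D rfl⟩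
end

section
/- Let T be a real number with T ≥ 1, and let q₁, q₂, q₃, … be any enumeration (a bijection from ℕ⁺) of the countably infinite set dom U. Then the finite-stage energies E_n(T) = (∑_{i=1}^n |q_i|·2^{−|q_i|/T}) / (∑_{i=1}^n 2^{−|q_i|/T}) diverge to ∞ as n → ∞. -/
open Filter

def PP (p : List Bool) : Prop :=
  p.length = p.findIdx (fun b => !b) + 1 + 2 ^ (p.findIdx (fun b => !b))

instance : DecidablePred PP := fun p => by unfold PP; infer_instance

lemma primrecPP : PrimrecPred PP := by
  have h1 : Primrec (fun p : List Bool => p.findIdx (fun b => !b)) :=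
    Primrec.list_findIdx Primrec.id (Primrec.not.comp₂ Primrec₂.right)
  have hp : Primrec₂ (fun a b : ℕ => a ^ b) := Primrec₂.unpaired'.1 Nat.Primrec.pow
  exact Primrec.eq.comp Primrec.list_length
    (Primrec.nat_add.comp (Primrec.succ.comp h1) (hp.comp (Primrec.const 2) h1))

def idC : Computer where
  f := fun p => if PP p then Part.some p else Part.none
  partrec := by
    have h : Computable (fun p : List Bool => decide (PP p)) := primrecPP.decide.to_comp
    refine (Partrec.cond h Computable.id.partrec Partrec.none).of_eq ?_
    intro p
    by_cases hp : PP p <;> simp [hp]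
  prefixFree := by
    intro p hp r hr hpr
    have hp' : PP p := by
      by_contra h
      simp [h] at hp
    have hr' : PP r := by
      by_contra h
      simp [h] at hr
    obtain ⟨t, rfl⟩ := hpr
    have hlt : p.findIdx (fun b => !b) < p.length := by
      unfold PP at hp'
      have := Nat.two_pow_pos (p.findIdx (fun b => !b))
      omega
    have he : (p ++ t).findIdx (fun b => !b) = p.findIdx (fun b => !b) := by
      rw [List.findIdx_append, if_pos hlt]
    unfold PP at hp' hr'
    rw [he, ← hp'] at hr'
    simp at hr'
    simp [hr']

def enc (x : Σ j : ℕ, (Fin (2 ^ j) → Bool)) : List Bool :=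
  List.replicate x.1 true ++ false :: List.ofFn x.2

lemma enc_idx (x) : (enc x).findIdx (fun b => !b) = x.1 := by
  have h : (List.replicate x.1 true).findIdx (fun b => !b) = x.1 := by
    induction x.1 with
    | zero => rfl
    | succ n ih => rw [List.replicate_succ, List.findIdx_cons, ih]; rfl
  simp only [enc, List.findIdx_append, h, List.length_replicate, lt_irrefl, if_false,
    List.findIdx_cons]
  simp

lemma enc_len (x) : (enc x).length = x.1 + 1 + 2 ^ x.1 := by
  simp [enc]; omega

lemma enc_PP (x) : PP (enc x) := by
  unfold PP; rw [enc_idx, enc_len]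

lemma enc_inj : Function.Injective enc := by
  rintro ⟨j, v⟩ ⟨k, w⟩ h
  have hj : j = k := by
    have := congrArg (fun l => List.findIdx (fun b => !b) l) h
    simpa [enc_idx] using this
  subst hj
  simp [enc] at h
  rw [h]

lemma anti : Antitone (fun n : ℕ => ((n : ℝ) + 1) * (1 / 2) ^ n) := by
  refine antitone_nat_of_succ_le fun n => ?_
  have : (0 : ℝ) < (1 / 2) ^ n := by positivity
  rw [pow_succ]; push_cast
  nlinarith [(Nat.cast_nonneg n : (0 : ℝ) ≤ n)]

lemma notsum_enc : ¬ Summable (fun x => ((enc x).length : ℝ) * (1 / 2) ^ (enc x).length) := by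
  intro h
  have h2 := h.sigma.tendsto_atTop_zero
  have h3 := h2.eventually (gt_mem_nhds (show (0 : ℝ) < 1 / 2 by norm_num))
  obtain ⟨j, hj⟩ := h3.exists
  simp only [enc_len, tsum_fintype, Finset.sum_const, Finset.card_univ, Fintype.card_fun,
    Fintype.card_bool, Fintype.card_fin, nsmul_eq_mul] at hj
  have e : (((2 ^ 2 ^ j : ℕ) : ℝ)) * (1 / 2) ^ (2 ^ j) = 1 := by
    push_cast; rw [← mul_pow]; norm_num
  have e2 : ((2 ^ j : ℕ) : ℝ) * (1 / 2) ^ j = 1 := by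
    push_cast; rw [← mul_pow]; norm_num
  rw [pow_add, pow_add, pow_one] at hj
  push_cast at hj e e2
  have hpos : (0 : ℝ) < (1 / 2) ^ j := by positivity
  have : (2 : ℝ) ^ 2 ^ j * ((j + 1 + 2 ^ j) * ((1 / 2) ^ j * (1 / 2) * (1 / 2) ^ 2 ^ j))
      = (j + 1) * (1 / 2) ^ j * (1 / 2) + 1 / 2 := by
    linear_combination ((j + 1 + 2 ^ j) * ((1 / 2 : ℝ) ^ j * (1 / 2))) * e + 1 / 2 * e2
  rw [this] at hj
  have : (0 : ℝ) ≤ (j + 1) * (1 / 2) ^ j * (1 / 2) := by positivity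
  linarith

lemma notsum (U : Computer) (hU : IsOptimal U)
    (q : ℕ → List Bool) 
    (hinj : Function.Injective q) (hsurj : ∀ p ∈ U.domain, ∃ n, q n = p) :
    ¬ Summable (fun i => ((q i).length : ℝ) * (1 / 2) ^ (q i).length) := by
  intro hs
  obtain ⟨d, hd⟩ := hU idC
  have key : ∀ x, ∃ i, (q i).length ≤ (enc x).length + d ∧ enc x ∈ U.f (q i) := by
    intro x
    obtain ⟨p', h1, h2⟩ := hd (enc x) (by simp [idC, enc_PP])
    have h3 := h2 (enc x) (by simp [idC, enc_PP])
    obtain ⟨i, rfl⟩ := hsurj p' (Part.dom_iff_mem.2 ⟨_, h3⟩)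
    exact ⟨i, h1, h3⟩
  choose g hg1 hg2 using key
  have ginj : Function.Injective g := by
    intro x y h
    apply enc_inj
    have h1 := hg2 x
    rw [h] at h1
    exact Part.mem_unique h1 (hg2 y)
  have hs' : Summable (fun i => (((q i).length : ℝ) + 1) * (1 / 2) ^ (q i).length) := by
    refine Summable.of_norm_bounded_eventually (hs.mul_left 2) ?_
    have hf : (q ⁻¹' {[]}).Finite := (Set.finite_singleton _).preimage hinj.injOn
    refine hf.subset ?_
    intro i hi
    by_contra hne
    apply hi
    have hl : 1 ≤ (q i).length := List.length_pos_iff.2 hne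
    have hl' : (1 : ℝ) ≤ (q i).length := by exact_mod_cast hl
    have : (0 : ℝ) < (1 / 2) ^ (q i).length := by positivity
    change ‖_‖ ≤ _
    rw [Real.norm_of_nonneg (by positivity)]
    nlinarith
  have h4 := hs'.comp_injective ginj
  apply notsum_enc
  refine Summable.of_nonneg_of_le (fun _ => by positivity) (fun x => ?_) (h4.mul_left (2 ^ d))
  have h5 := anti (hg1 x)
  simp only [Function.comp] at h5 ⊢
  have h6 := mul_le_mul_of_nonneg_left h5 (show (0 : ℝ) ≤ 2 ^ d by positivity)
  refine le_trans ?_ h6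
  have e : (2 : ℝ) ^ d * (1 / 2) ^ d = 1 := by
    rw [← mul_pow]; norm_num
  rw [pow_add]; push_cast
  have hpos : (0 : ℝ) < (1 / 2) ^ (enc x).length := by positivity
  have : (2 : ℝ) ^ d * (((enc x).length + d + 1) * ((1 / 2) ^ (enc x).length * (1 / 2) ^ d))
      = ((enc x).length + d + 1) * (1 / 2) ^ (enc x).length := by
    linear_combination (((enc x).length + d + 1) * (1 / 2 : ℝ) ^ (enc x).length) * e
  rw [this]
  have : (0 : ℝ) ≤ d := Nat.cast_nonneg d
  nlinarith

/-- **Theorem (paper Thm 10(ii)).** For real `T ≥ 1` and any enumeration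
`q₁, q₂, …` of `dom U`, the finite-stage energies
`E_n(T) = (∑_{i=1}^n |q_i|·2^{-|q_i|/T}) / (∑_{i=1}^n 2^{-|q_i|/T})`
diverge to infinity as `n → ∞`. -/
theorem finite_stage_energy_tendsto_atTop (U : Computer) (hU : IsOptimal U)
    (T : ℝ) (hT : 1 ≤ T)
    (q : ℕ → List Bool) (hmem : ∀ n, q n ∈ U.domain)
    (hinj : Function.Injective q) (hsurj : ∀ p ∈ U.domain, ∃ n, q n = p) :
    Tendsto (fun n : ℕ =>
      (∑ i ∈ Finset.range n,
        ((q i).length : ℝ) * (2 : ℝ) ^ (-((q i).length : ℝ) / T)) /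
      (∑ i ∈ Finset.range n, (2 : ℝ) ^ (-((q i).length : ℝ) / T)))
      atTop atTop := by
  have hns := notsum U hU q hinj hsurj
  have hW := (not_summable_iff_tendsto_nat_atTop_of_nonneg (fun i => by positivity)).1 hns
  have hlen : ∀ M : ℝ, ∃ N : ℕ, ∀ i ≥ N, M ≤ ((q i).length : ℝ) := by
    intro M
    have hf : (q ⁻¹' {l | l.length ≤ ⌈M⌉₊}).Finite :=
      (List.finite_length_le Bool _).preimage hinj.injOn
    obtain ⟨B, hB⟩ := hf.bddAbove
    refine ⟨B + 1, fun i hi => ?_⟩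
    by_contra hlt
    have : i ≤ B := hB (by
      simp only [Set.mem_preimage, Set.mem_ofPred_eq]
      have h1 := (not_le.1 hlt).le.trans (Nat.le_ceil M)
      exact_mod_cast h1)
    omega
  have hz : ∀ i, (0 : ℝ) < (2 : ℝ) ^ (-((q i).length : ℝ) / T) := fun i => by positivity
  have hzc : ∀ i, ((1 : ℝ) / 2) ^ (q i).length ≤ (2 : ℝ) ^ (-((q i).length : ℝ) / T) := by
    intro i
    have : ((1 : ℝ) / 2) ^ (q i).length = (2 : ℝ) ^ (-((q i).length : ℝ)) := by
      rw [Real.rpow_neg (by norm_num), Real.rpow_natCast, one_div, inv_pow]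
    rw [this]
    apply Real.rpow_le_rpow_of_exponent_le (by norm_num)
    rw [neg_div, neg_le_neg_iff]
    exact div_le_self (Nat.cast_nonneg _) hT
  rw [tendsto_atTop]
  intro M
  obtain ⟨N, hN⟩ := hlen (2 * max M 0)
  set e : ℕ → ℝ := fun i => ((q i).length - M) * (2 : ℝ) ^ (-((q i).length : ℝ) / T)
    - 1 / 2 * (((q i).length : ℝ) * (1 / 2) ^ (q i).length) with he
  have hepos : ∀ i ≥ N, 0 ≤ e i := by
    intro i hi
    have h1 := hN i hi
    have h2 := le_max_left M 0
    have h3 := mul_le_mul_of_nonneg_left (hzc i) (Nat.cast_nonneg (q i).length : (0 : ℝ) ≤ _)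
    have h4 : (0 : ℝ) ≤ ((q i).length / 2 - M) * (2 : ℝ) ^ (-((q i).length : ℝ) / T) :=
      mul_nonneg (by linarith) (hz i).le
    simp only [he]
    nlinarith
  have hsum : ∀ n ≥ N, ∑ i ∈ Finset.range N, e i ≤ ∑ i ∈ Finset.range n, e i := by
    intro n hn
    refine Finset.sum_le_sum_of_subset_of_nonneg (Finset.range_mono hn) ?_
    intro i _ hi
    exact hepos i (by simpa using hi)
  filter_upwards [hW.eventually_ge_atTop (-2 * ∑ i ∈ Finset.range N, e i),
    eventually_ge_atTop N, eventually_ge_atTop 1] with n h1 h2 h3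
  have h4 := hsum n h2
  rw [le_div_iff₀ (Finset.sum_pos (fun i _ => hz i) (by simp; omega))]
  have h5 : ∑ i ∈ Finset.range n, e i = 
      ∑ i ∈ Finset.range n, ((q i).length : ℝ) * (2 : ℝ) ^ (-((q i).length : ℝ) / T)
      - M * ∑ i ∈ Finset.range n, (2 : ℝ) ^ (-((q i).length : ℝ) / T)
      - 1 / 2 * ∑ i ∈ Finset.range n, (((q i).length : ℝ) * (1 / 2) ^ (q i).length) := by
    simp only [he, Finset.sum_sub_distrib, Finset.mul_sum, sub_mul]
  linarith
end
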